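/- For each integer r ≥ 1, let S_r be a set of residue classes modulo r (each residue class viewed as a subset of the non-negative integers), and suppose that for each r ∈ {1,2,3,4,5,7}, S_r is either empty or consists of all r residue classes modulo r. Then there exists a non-empty quasi-finite family 𝓕 of finite graphs, each having at least one edge, such that: (a) for every integer r ≥ 1 there is a constant K_r such that |sat(n,𝓕) − (1 − 1/r)·n| ≤ K_r for every n that lies in some class of S_r but lies in no class of S_q for any q < r; (b) there is a function g : ℤ_{≥0} → ℝ with g(n)/n → 0 such that sat(n,𝓕) ≥ n − g(n) for every n ≥ 0 that lies in no class of any S_r; (c) if there are only finitely many integers r ≥ 1 for which some non-negative integer lies in a class of S_r but in no class of S_q for any q < r, then 𝓕 can moreover be taken to be finite. -/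

import Mathlib

open SimpleGraph Filter Topology

/-- `H` (on `β`) is contained in `G` (on `α`): `G` has a subgraph isomorphic to `H`. -/
def Contains {α β : Type*} (G : SimpleGraph α) (H : SimpleGraph β) : Prop :=
  ∃ f : β ↪ α, ∀ a b : β, H.Adj a b → G.Adj (f a) (f b)

/-- A family of finite graphs, each given on a vertex set `Fin n`. -/
abbrev GraphFam := Set ((n : ℕ) × SimpleGraph (Fin n))

/-- `G` is `𝓕`-saturated: `G` contains no member of `𝓕`, but adding any missing edge to `G`
creates a member of `𝓕`. -/
def FamSaturated (𝓕 : GraphFam) {α : Type*} (G : SimpleGraph α) : Prop :=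
  (∀ F ∈ 𝓕, ¬ Contains G F.2) ∧
    ∀ u v : α, u ≠ v → ¬ G.Adj u v →
      ∃ F ∈ 𝓕, Contains (G ⊔ SimpleGraph.fromEdgeSet {s(u, v)}) F.2

/-- `sat n 𝓕` is the minimum number of edges in an `𝓕`-saturated graph on `n` vertices. -/
noncomputable def sat (n : ℕ) (𝓕 : GraphFam) : ℕ :=
  sInf {m | ∃ G : SimpleGraph (Fin n), FamSaturated 𝓕 G ∧ Nat.card G.edgeSet = m}

/-- `𝓕` is quasi-finite: for every tree `T` there is a constant `C` such that every graph in `𝓕`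
has at most `C` connected components isomorphic to `T`. -/
def QuasiFinite (𝓕 : GraphFam) : Prop :=
  ∀ (t : ℕ) (T : SimpleGraph (Fin t)), T.IsTree →
    ∃ C : ℕ, ∀ F ∈ 𝓕,
      Nat.card {c : F.2.ConnectedComponent // Nonempty (SimpleGraph.induce c.supp F.2 ≃g T)} ≤ C

/-- `C` is a residue class modulo `r`, viewed as a subset of the non-negative integers. -/
def ResidueClass (r : ℕ) (C : Set ℕ) : Prop := ∃ c < r, C = {n : ℕ | n % r = c}

section Basics

variable {V W U : Type}

theorem Contains.trans {G : SimpleGraph V} {H : SimpleGraph W} {K : SimpleGraph U}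
    (h : Contains G H) (h' : Contains H K) : Contains G K := by
  obtain ⟨f, hf⟩ := h
  obtain ⟨g, hg⟩ := h'
  exact ⟨g.trans f, fun a b hab => hf _ _ (hg _ _ hab)⟩

theorem Contains.of_le {G H : SimpleGraph V} (h : H ≤ G) : Contains G H :=
  ⟨Function.Embedding.refl V, fun _ _ hab => h hab⟩

theorem contains_induce (G : SimpleGraph V) (S : Set V) : Contains G (G.induce S) :=
  ⟨Function.Embedding.subtype _, fun _ _ h => h⟩

/-- The graph `G` with the pair `uv` added as an edge. -/
abbrev addE (G : SimpleGraph V) (u v : V) : SimpleGraph V :=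
  G ⊔ SimpleGraph.fromEdgeSet {s(u, v)}

theorem addE_adj {G : SimpleGraph V} {u v x y : V} :
    (addE G u v).Adj x y ↔ G.Adj x y ∨ (x ≠ y ∧ (x = u ∧ y = v ∨ x = v ∧ y = u)) := by
  simp only [addE, SimpleGraph.sup_adj, SimpleGraph.fromEdgeSet_adj, Set.mem_singleton_iff,
    Sym2.eq_iff]
  tauto

theorem le_addE (G : SimpleGraph V) (u v : V) : G ≤ addE G u v := le_sup_left

theorem addE_comm (G : SimpleGraph V) (u v : V) : addE G u v = addE G v u := by
  simp only [addE, Sym2.eq_swap]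

/-- The degree of a vertex, as a natural number. -/
noncomputable def dg (G : SimpleGraph V) (v : V) : ℕ := (G.neighborSet v).ncard

theorem dg_le_of_embedding [Finite V] {G : SimpleGraph V} {H : SimpleGraph W} (f : W ↪ V)
    (hf : ∀ a b, H.Adj a b → G.Adj (f a) (f b)) (a : W) : dg H a ≤ dg G (f a) := by
  unfold dg
  rw [← Set.ncard_image_of_injective _ f.injective]
  apply Set.ncard_le_ncard _ (Set.toFinite _)
  rintro _ ⟨b, hb, rfl⟩
  exact hf _ _ hb

/-- A set of vertices without edges leaving it. -/
def Closed (G : SimpleGraph V) (D : Set V) : Prop := ∀ x ∈ D, ∀ y, G.Adj x y → y ∈ D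

theorem Closed.compl {G : SimpleGraph V} {D : Set V} (h : Closed G D) : Closed G Dᶜ :=
  fun x hx y hxy hy => hx (h y hy x hxy.symm)

/-- A minimal nonempty closed set of vertices. -/
structure IsComp (G : SimpleGraph V) (D : Set V) : Prop where
  nonempty : D.Nonempty
  closed : Closed G D
  minimal : ∀ D' ⊆ D, D'.Nonempty → Closed G D' → D' = D

/-- Every nonempty subset of `D` has a vertex with at most one neighbour inside the subset. -/
def Treeish (G : SimpleGraph V) (D : Set V) : Prop :=
  ∀ Z ⊆ D, Z.Nonempty → ∃ x ∈ Z, ∀ y ∈ Z, ∀ z ∈ Z, G.Adj x y → G.Adj x z → y = z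

/-- `f` traces a cycle of length `s` in `G`. -/
def Cyc (G : SimpleGraph V) (s : ℕ) (f : ZMod s → V) : Prop :=
  Function.Injective f ∧ ∀ i, G.Adj (f i) (f (i + 1))

theorem Cyc.map {G : SimpleGraph V} {H : SimpleGraph W} {s : ℕ} {f : ZMod s → W}
    (h : Cyc H s f) (g : W ↪ V) (hg : ∀ a b, H.Adj a b → G.Adj (g a) (g b)) :
    Cyc G s (g ∘ f) :=
  ⟨g.injective.comp h.1, fun i => hg _ _ (h.2 i)⟩

theorem ZMod.add_one_ne_sub_one {s : ℕ} (hs : 3 ≤ s) (i : ZMod s) : i + 1 ≠ i - 1 := by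
  intro h
  have h2 : ((2 : ℕ) : ZMod s) = 0 := by
    push_cast
    linear_combination h
  rw [ZMod.natCast_eq_zero_iff] at h2
  exact absurd (Nat.le_of_dvd (by norm_num) h2) (by omega)

theorem Cyc.adj_pred {G : SimpleGraph V} {s : ℕ} {f : ZMod s → V} (h : Cyc G s f) (i : ZMod s) :
    G.Adj (f i) (f (i - 1)) := by
  have := (h.2 (i - 1)).symm
  rwa [sub_add_cancel] at this

theorem Cyc.not_treeish {G : SimpleGraph V} {s : ℕ} (hs : 3 ≤ s) {f : ZMod s → V}
    (h : Cyc G s f) {D : Set V} (hD : Treeish G D) : ¬ Set.range f ⊆ D := by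
  intro hsub
  obtain ⟨_, ⟨i, rfl⟩, hx⟩ := hD _ hsub ⟨f 0, 0, rfl⟩
  have := hx _ ⟨i + 1, rfl⟩ _ ⟨i - 1, rfl⟩ (h.2 i) (h.adj_pred i)
  exact ZMod.add_one_ne_sub_one hs i (h.1 this)

theorem ZMod.forall_of_add_one {s : ℕ} [NeZero s] {p : ZMod s → Prop} (i : ZMod s) (hi : p i)
    (h : ∀ j, p j → p (j + 1)) (j : ZMod s) : p j := by
  have key : ∀ k : ℕ, p (i + k) := by
    intro k
    induction k with
    | zero => simpa using hi
    | succ k ih =>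
      have := h _ ih
      push_cast
      rwa [← add_assoc]
  have := key (j - i).val
  rwa [ZMod.natCast_zmod_val, add_sub_cancel] at this

theorem Cyc.range_subset {G : SimpleGraph V} {s : ℕ} [NeZero s] {f : ZMod s → V}
    (h : Cyc G s f) {D : Set V} (hD : Closed G D) {i : ZMod s} (hi : f i ∈ D) :
    Set.range f ⊆ D := by
  rintro _ ⟨j, rfl⟩
  exact ZMod.forall_of_add_one (p := fun j => f j ∈ D) i hi (fun j hj => hD _ hj _ (h.2 j)) j

theorem Cyc.of_addE {G : SimpleGraph V} {s : ℕ} (hs : 3 ≤ s) {f : ZMod s → V} {u v : V}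
    (h : Cyc (addE G u v) s f) {D : Set V} (hD : Closed G D) (hu : u ∈ D) (hv : v ∉ D) :
    Cyc G s f := by
  have : NeZero s := ⟨by omega⟩
  have key : ∀ (E : Set V) (a b : V), Closed G E → a ∉ E → b ∈ E →
      Cyc (addE G a b) s f → ∀ i, ¬ (f i = a ∧ f (i + 1) = b) := by
    rintro E a b hE ha hb hc i ⟨rfl, rfl⟩
    have hE' : ∀ j, f j ∈ E := by
      refine ZMod.forall_of_add_one (p := fun j => f j ∈ E) (i + 1) hb ?_
      intro j hj
      rcases addE_adj.1 (hc.2 j) with h1 | ⟨-, ⟨h1, -⟩ | ⟨h1, h2⟩⟩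
      · exact hE _ hj _ h1
      · exact absurd (h1 ▸ hj) ha
      · have e1 := hc.1 h1
        have e2 := hc.1 h2
        exact absurd (by rw [e1] at e2; linear_combination e2) (ZMod.add_one_ne_sub_one hs i)
    exact ha (hE' i)
  refine ⟨h.1, fun i => ?_⟩
  rcases addE_adj.1 (h.2 i) with h1 | ⟨-, ⟨h1, h2⟩ | ⟨h1, h2⟩⟩
  · exact h1
  · exact absurd ⟨h1, h2⟩ (key Dᶜ u v hD.compl (by simpa using hu) hv h i)
  · exact absurd ⟨h1, h2⟩ (key D v u hD hv hu (addE_comm G u v ▸ h) i)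

end Basics

section FunctionalGraphs

variable {V : Type}

/-- The graph joining every vertex to its image under `F`. -/
def funG (F : V → V) : SimpleGraph V where
  Adj x y := x ≠ y ∧ (F x = y ∨ F y = x)
  symm := ⟨fun _ _ h => ⟨h.1.symm, h.2.symm⟩⟩
  loopless := ⟨fun _ h => h.1 rfl⟩

theorem treeish_funG [Finite V] {F : V → V} {D : Set V} (rank : V → ℕ)
    (h : ∀ x ∈ D, F x ≠ x → rank (F x) < rank x) : Treeish (funG F) D := by
  intro Z hZ hne
  obtain ⟨x, hx, hmax⟩ := Set.exists_max_image Z rank (Set.toFinite _) hne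
  refine ⟨x, hx, ?_⟩
  have key : ∀ y ∈ Z, (funG F).Adj x y → y = F x := by
    rintro y hy ⟨hxy, h1 | h1⟩
    · exact h1.symm
    · have := h y (hZ hy) (by rw [h1]; exact hxy)
      rw [h1] at this
      exact absurd (hmax y hy) (by omega)
  intro y hy z hz hxy hxz
  rw [key y hy hxy, key z hz hxz]

theorem card_edgeSet_funG_le [Finite V] (F : V → V) :
    Nat.card (funG F).edgeSet ≤ {x | F x ≠ x}.ncard := by
  rw [Nat.card_coe_set_eq]
  refine (Set.ncard_le_ncard (t := (fun x => s(x, F x)) '' {x | F x ≠ x}) ?_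
    (Set.toFinite _)).trans (Set.ncard_image_le (Set.toFinite _))
  intro e
  induction e using Sym2.ind with
  | _ x y =>
    intro h
    rw [SimpleGraph.mem_edgeSet] at h
    obtain ⟨hxy, rfl | rfl⟩ := h
    · exact ⟨x, hxy.symm, rfl⟩
    · exact ⟨y, hxy, Sym2.eq_swap⟩

/-- The map `par` on each of `m` copies of `τ`. -/
def copies {τ : Type} (m : ℕ) (par : τ → τ) : Fin m × τ → Fin m × τ := fun x => (x.1, par x.2)

theorem funG_copies_adj {τ : Type} {m : ℕ} {par : τ → τ} {x y : Fin m × τ} :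
    (funG (copies m par)).Adj x y ↔ x.1 = y.1 ∧ (funG par).Adj x.2 y.2 := by
  obtain ⟨i, a⟩ := x
  obtain ⟨j, b⟩ := y
  simp only [funG, copies, Prod.mk.injEq, ne_eq]
  grind

end FunctionalGraphs

/-- A monotone, local graph property forcing sparse graphs that satisfy a saturation condition to
be unions of copies of a fixed tree on `r` vertices. -/
structure Gadget (r : ℕ) where
  Bad : {V : Type} → SimpleGraph V → Prop
  size : ℕ
  bad_mono : ∀ {V W : Type} [Finite V] [Finite W] {G : SimpleGraph V} {H : SimpleGraph W},
    Contains G H → Bad H → Bad G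
  bad_local : ∀ {V : Type} [Finite V] {G : SimpleGraph V}, Bad G →
    ∃ S : Set V, S.ncard ≤ size ∧ (∃ a, ∀ x, (G.induce S).Reachable a x) ∧ Bad (G.induce S)
  τ : Type
  fin : Fintype τ
  card_τ : Fintype.card τ = r
  par : τ → τ
  root : τ
  par_root : par root = root
  rank : τ → ℕ
  rank_lt : ∀ a, par a ≠ a → rank (par a) < rank a
  not_bad : ∀ m, ¬ Bad (funG (copies m par))
  bad_add : ∀ m x y, x ≠ y → ¬ (funG (copies m par)).Adj x y →
    Bad (addE (funG (copies m par)) x y)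
  join_full : ∀ {V : Type} [Finite V] {G : SimpleGraph V}, ¬ Bad G → ∀ D₁ D₂ : Set V,
    Disjoint D₁ D₂ → IsComp G D₁ → IsComp G D₂ → Treeish G D₁ → Treeish G D₂ →
    D₁.ncard = D₂.ncard → D₁.ncard < r → ∃ v ∈ D₁, ∃ u ∈ D₂, ¬ Bad (addE G v u)

attribute [instance] Gadget.fin

/-- Any component of the wrong size can be joined to any tree component. -/
def Gadget.Std {r : ℕ} (g : Gadget r) : Prop :=
  ∀ {V : Type} [Finite V] {G : SimpleGraph V}, ¬ g.Bad G → ∀ D₁ D₂ : Set V,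
    Disjoint D₁ D₂ → IsComp G D₁ → IsComp G D₂ → Treeish G D₂ → D₁.ncard ≠ r →
    ∃ v ∈ D₁, ∃ u ∈ D₂, ¬ g.Bad (addE G v u)

/-- Cycle length attached to an index. -/
def cl (i : ℕ × ℕ) : ℕ := (i.1 + 1) * (i.1 + 4) + i.2

theorem four_le_cl (i : ℕ × ℕ) : 4 ≤ cl i := by
  unfold cl
  nlinarith [Nat.zero_le i.1, Nat.zero_le i.2]

instance (i : ℕ × ℕ) : NeZero (cl i) := ⟨by have := four_le_cl i; omega⟩

theorem cl_inj {i j : ℕ × ℕ} (hi : i.2 ≤ i.1) (hj : j.2 ≤ j.1) (h : cl i = cl j) : i = j := by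
  obtain ⟨a, b⟩ := i
  obtain ⟨c, d⟩ := j
  simp only [cl] at *
  rcases lt_trichotomy a c with h1 | h1 | h1
  · nlinarith
  · subst h1
    simp at h
    simp [h]
  · nlinarith

section Family

variable (gad : ∀ ρ : ℕ, Gadget (ρ + 1)) (I : Set (ℕ × ℕ)) {V W : Type}

/-- A configuration at a cycle of length `cl i` that is forbidden. -/
def Viol (i j : ℕ × ℕ) (G : SimpleGraph V) : Prop :=
  ∃ f, Cyc G (cl i) f ∧ ((∃ k y, G.Adj (f k) y ∧ y ≠ f (k + 1) ∧ y ≠ f (k - 1)) ∨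
    (∃ g, Cyc G (cl j) g ∧ ∀ a b, f a ≠ g b) ∨ (gad i.1).Bad (G.induce (Set.range f)ᶜ))

/-- All vertices are reachable from one of two vertices. -/
def TwoRoot (G : SimpleGraph V) : Prop := ∃ a b, ∀ x, G.Reachable a x ∨ G.Reachable b x

/-- The property of containing no member of the family. -/
def Allowed (G : SimpleGraph V) : Prop :=
  (¬ ∃ f, Cyc G 3 f) ∧ ∀ i ∈ I, ∀ j ∈ I, ¬ Viol gad i j G

/-- A bound for the size of the local configurations at an index. -/
def bnd (i : ℕ × ℕ) : ℕ := cl i + 1 + (gad i.1).size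

/-- The family of forbidden graphs. -/
def fam : GraphFam := {F | TwoRoot F.2 ∧ ((F.1 ≤ 3 ∧ ∃ f, Cyc F.2 3 f) ∨
  ∃ i ∈ I, ∃ j ∈ I, F.1 ≤ bnd gad i + bnd gad j ∧ Viol gad i j F.2)}

variable {gad I}

theorem Viol.mono [Finite V] [Finite W] {i j : ℕ × ℕ} {G : SimpleGraph V} {H : SimpleGraph W}
    (h : Contains G H) (hv : Viol gad i j H) : Viol gad i j G := by
  obtain ⟨φ, hφ⟩ := h
  obtain ⟨f, hf, h | h | h⟩ := hv
  · obtain ⟨k, y, h1, h2, h3⟩ := h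
    exact ⟨φ ∘ f, hf.map φ hφ, .inl ⟨k, φ y, hφ _ _ h1, by simpa using h2, by simpa using h3⟩⟩
  · obtain ⟨g, h1, h2⟩ := h
    exact ⟨φ ∘ f, hf.map φ hφ, .inr (.inl ⟨φ ∘ g, h1.map φ hφ, by simpa using h2⟩)⟩
  · refine ⟨φ ∘ f, hf.map φ hφ, .inr (.inr ((gad i.1).bad_mono ?_ h))⟩
    refine ⟨⟨fun x => ⟨φ x.1, ?_⟩, ?_⟩, fun a b hab => hφ _ _ hab⟩
    · rintro ⟨k, hk⟩
      exact x.2 ⟨k, φ.injective hk⟩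
    · intro x y hxy
      exact Subtype.ext (φ.injective (by simpa using hxy))

theorem Allowed.mono [Finite V] [Finite W] {G : SimpleGraph V} {H : SimpleGraph W}
    (h : Contains G H) (hG : Allowed gad I G) : Allowed gad I H := by
  refine ⟨?_, fun i hi j hj hv => hG.2 i hi j hj (hv.mono h)⟩
  rintro ⟨f, hf⟩
  obtain ⟨φ, hφ⟩ := h
  exact hG.1 ⟨_, hf.map φ hφ⟩

theorem Cyc.induce {G : SimpleGraph V} {s : ℕ} {f : ZMod s → V} (hf : Cyc G s f) {S : Set V}
    (hS : ∀ k, f k ∈ S) : Cyc (G.induce S) s (fun k => ⟨f k, hS k⟩) :=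
  ⟨fun a b hab => hf.1 (by simpa using hab), fun i => hf.2 i⟩

theorem Cyc.reachable {G : SimpleGraph V} {s : ℕ} [NeZero s] {f : ZMod s → V} (hf : Cyc G s f)
    (k : ZMod s) : G.Reachable (f 0) (f k) :=
  ZMod.forall_of_add_one (p := fun k => G.Reachable (f 0) (f k)) 0 (Reachable.refl _)
    (fun j hj => hj.trans (hf.2 j).reachable) k

theorem ncard_range_zmod {s : ℕ} [NeZero s] {f : ZMod s → V} (hf : Function.Injective f) :
    (Set.range f).ncard = s := by
  rw [← Set.image_univ, Set.ncard_image_of_injective _ hf, Set.ncard_univ, Nat.card_zmod]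

theorem Viol.exists_local [Finite V] {i j : ℕ × ℕ} {G : SimpleGraph V} (hv : Viol gad i j G) :
    ∃ S : Set V, S.ncard ≤ bnd gad i + bnd gad j ∧ TwoRoot (G.induce S) ∧
      Viol gad i j (G.induce S) := by
  obtain ⟨f, hf, h⟩ := hv
  have hcf := ncard_range_zmod hf.1
  rcases h with h | h | h
  · obtain ⟨k, y, h1, h2, h3⟩ := h
    have hS : ∀ k, f k ∈ Set.range f ∪ {y} := fun k => .inl ⟨k, rfl⟩
    have hf' := hf.induce hS
    refine ⟨Set.range f ∪ {y}, ?_, ⟨⟨f 0, hS 0⟩, ⟨f 0, hS 0⟩, ?_⟩, _, hf',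
      .inl ⟨k, ⟨y, .inr rfl⟩, h1, ?_, ?_⟩⟩
    · refine (Set.ncard_union_le _ _).trans ?_
      rw [hcf, Set.ncard_singleton]
      unfold bnd
      omega
    · rintro ⟨_, ⟨l, rfl⟩ | rfl⟩
      · exact .inl (hf'.reachable l)
      · exact .inl ((hf'.reachable k).trans (Adj.reachable h1))
    · exact fun h => h2 (congrArg Subtype.val h)
    · exact fun h => h3 (congrArg Subtype.val h)
  · obtain ⟨g, hg, hd⟩ := h
    have hcg := ncard_range_zmod hg.1
    have hS : ∀ k, f k ∈ Set.range f ∪ Set.range g := fun k => .inl ⟨k, rfl⟩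
    have hS' : ∀ k, g k ∈ Set.range f ∪ Set.range g := fun k => .inr ⟨k, rfl⟩
    have hf' := hf.induce hS
    have hg' := hg.induce hS'
    refine ⟨Set.range f ∪ Set.range g, ?_, ⟨⟨f 0, hS 0⟩, ⟨g 0, hS' 0⟩, ?_⟩, _, hf',
      .inr (.inl ⟨_, hg', by simpa using hd⟩)⟩
    · refine (Set.ncard_union_le _ _).trans ?_
      rw [hcf, hcg]
      unfold bnd
      omega
    · rintro ⟨_, ⟨l, rfl⟩ | ⟨l, rfl⟩⟩
      · exact .inl (hf'.reachable l)
      · exact .inr (hg'.reachable l)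
  · obtain ⟨T, hT, ⟨a, ha⟩, hbad⟩ := (gad i.1).bad_local h
    set S : Set V := Set.range f ∪ Subtype.val '' T with hSdef
    have hS : ∀ k, f k ∈ S := fun k => .inl ⟨k, rfl⟩
    have hT' : ∀ x : T, x.1.1 ∈ S := fun x => .inr ⟨x.1, x.2, rfl⟩
    have hf' := hf.induce hS
    refine ⟨S, ?_, ⟨⟨f 0, hS 0⟩, ⟨a.1.1, hT' a⟩, ?_⟩, _, hf',
      .inr (.inr ((gad i.1).bad_mono ?_ hbad))⟩
    · refine (Set.ncard_union_le _ _).trans ?_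
      rw [hcf, Set.ncard_image_of_injective _ Subtype.val_injective]
      unfold bnd
      omega
    · rintro ⟨_, ⟨l, rfl⟩ | ⟨x, hx, rfl⟩⟩
      · exact .inl (hf'.reachable l)
      · right
        let φ : (G.induce (Set.range f)ᶜ).induce T →g G.induce S :=
          ⟨fun x => ⟨x.1.1, hT' x⟩, fun h => h⟩
        exact (ha ⟨x, hx⟩).map φ
    · refine ⟨⟨fun x => ⟨⟨x.1.1, hT' x⟩, ?_⟩, ?_⟩, fun a b hab => hab⟩
      · rintro ⟨k, hk⟩
        exact x.1.2 ⟨k, by simpa using hk⟩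
      · intro x y hxy
        exact Subtype.ext (Subtype.ext (by simpa using hxy))

theorem exists_fin_copy [Finite V] (G : SimpleGraph V) :
    ∃ H : SimpleGraph (Fin (Nat.card V)), Nonempty (G ≃g H) :=
  ⟨G.map (Finite.equivFin V).toEmbedding, ⟨SimpleGraph.Iso.map _ _⟩⟩

theorem contains_of_iso {G : SimpleGraph V} {H : SimpleGraph W} (e : G ≃g H) : Contains H G :=
  ⟨e.toEquiv.toEmbedding, fun _ _ h => e.map_rel_iff.2 h⟩

theorem TwoRoot.of_iso {G : SimpleGraph V} {H : SimpleGraph W} (e : G ≃g H) (h : TwoRoot G) :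
    TwoRoot H := by
  obtain ⟨a, b, hab⟩ := h
  refine ⟨e a, e b, fun x => ?_⟩
  have := hab (e.symm x)
  refine this.imp (fun h => ?_) (fun h => ?_) <;>
  · have := h.map e.toHom
    simpa using this

theorem free_iff_allowed [Finite V] {G : SimpleGraph V} :
    (∀ F ∈ fam gad I, ¬ Contains G F.2) ↔ Allowed gad I G := by
  constructor
  · intro h
    refine ⟨?_, ?_⟩
    · rintro ⟨f, hf⟩
      have hS : ∀ k, f k ∈ Set.range f := fun k => ⟨k, rfl⟩
      have hf' := hf.induce hS
      obtain ⟨H, ⟨e⟩⟩ := exists_fin_copy (G.induce (Set.range f))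
      refine h ⟨_, H⟩ ⟨TwoRoot.of_iso e ⟨⟨f 0, hS 0⟩, ⟨f 0, hS 0⟩, ?_⟩, .inl ⟨?_, ?_⟩⟩
        ((contains_induce G _).trans (contains_of_iso e.symm))
      · rintro ⟨_, ⟨k, rfl⟩⟩
        exact .inl (hf'.reachable k)
      · simp only
        rw [Nat.card_coe_set_eq, ncard_range_zmod hf.1]
      · obtain ⟨φ, hφ⟩ := contains_of_iso e
        exact ⟨_, hf'.map φ hφ⟩
    · intro i hi j hj hv
      obtain ⟨S, hS, hr, hv'⟩ := hv.exists_local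
      obtain ⟨H, ⟨e⟩⟩ := exists_fin_copy (G.induce S)
      refine h ⟨_, H⟩ ⟨hr.of_iso e, .inr ⟨i, hi, j, hj, ?_, hv'.mono (contains_of_iso e)⟩⟩
        ((contains_induce G _).trans (contains_of_iso e.symm))
      simpa [Nat.card_coe_set_eq] using hS
  · rintro hG F ⟨-, ⟨-, f, hf⟩ | ⟨i, hi, j, hj, -, hv⟩⟩ hc
    · exact (Allowed.mono hc hG).1 ⟨f, hf⟩
    · exact (Allowed.mono hc hG).2 i hi j hj hv

theorem famSaturated_iff [Finite V] {G : SimpleGraph V} :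
    FamSaturated (fam gad I) G ↔ Allowed gad I G ∧
      ∀ u v, u ≠ v → ¬ G.Adj u v → ¬ Allowed gad I (addE G u v) := by
  unfold FamSaturated
  rw [free_iff_allowed]
  refine and_congr_right fun _ => ?_
  refine forall_congr' fun u => forall_congr' fun v => forall_congr' fun _ =>
    forall_congr' fun _ => ?_
  rw [← free_iff_allowed]
  push Not
  rfl

end Family

section Components

variable {V : Type}

theorem SimpleGraph.ConnectedComponent.isComp {G : SimpleGraph V} (C : G.ConnectedComponent) :
    IsComp G C.supp where
  nonempty := C.nonempty_supp
  closed := fun _ hx _ hxy => C.mem_supp_of_adj_mem_supp hx hxy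
  minimal := by
    rintro D hD ⟨x, hx⟩ hcl
    refine hD.antisymm fun y hy => ?_
    obtain ⟨p⟩ := C.reachable_of_mem_supp (hD hx) hy
    clear hy
    induction p with
    | nil => exact hx
    | cons h p ih => exact ih (hcl _ hx _ h)

theorem exists_le_one_neighbor_of_isAcyclic [Finite V] [Nonempty V] {G : SimpleGraph V}
    (h : G.IsAcyclic) : ∃ x, ∀ y z, G.Adj x y → G.Adj x z → y = z := by
  classical
  obtain ⟨v⟩ := ‹Nonempty V›
  let C := G.connectedComponentMk v
  have := Fintype.ofFinite C.supp
  have hT : C.toSimpleGraph.IsTree := h.isTree_connectedComponent C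
  rcases subsingleton_or_nontrivial C.supp with hs | hn
  · refine ⟨v, fun y z hy hz => ?_⟩
    have h1 : (⟨y, C.mem_supp_of_adj_mem_supp rfl hy⟩ : C.supp) =
      ⟨z, C.mem_supp_of_adj_mem_supp rfl hz⟩ := Subsingleton.elim _ _
    exact congrArg Subtype.val h1
  · have : Nontrivial C := hn
    have := Fintype.ofFinite C
    obtain ⟨x, hx⟩ := hT.exists_vert_degree_one_of_nontrivial
    rw [SimpleGraph.degree_eq_one_iff_existsUnique_adj] at hx
    refine ⟨x.1, fun y z hy hz => ?_⟩
    have := hx.unique (y₁ := ⟨y, C.mem_supp_of_adj_mem_supp x.2 hy⟩)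
      (y₂ := ⟨z, C.mem_supp_of_adj_mem_supp x.2 hz⟩) hy hz
    exact congrArg Subtype.val this

theorem treeish_of_isAcyclic [Finite V] {G : SimpleGraph V} {D : Set V}
    (h : (G.induce D).IsAcyclic) : Treeish G D := by
  intro Z hZ hne
  have : Nonempty Z := hne.to_subtype
  have hac : (G.induce Z).IsAcyclic := by
    refine h.comap (⟨fun x => ⟨x.1, hZ x.2⟩, fun h => h⟩ : G.induce Z →g G.induce D) ?_
    intro x y hxy
    exact Subtype.ext (congrArg (fun z : D => z.1) hxy)
  obtain ⟨x, hx⟩ := exists_le_one_neighbor_of_isAcyclic hac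
  exact ⟨x.1, x.2, fun y hy z hz hxy hxz =>
    congrArg Subtype.val (hx ⟨y, hy⟩ ⟨z, hz⟩ hxy hxz)⟩

theorem IsComp.preimage {G : SimpleGraph V} {D K : Set V} (h : IsComp G D) (hd : Disjoint D K) :
    IsComp (G.induce Kᶜ) (Subtype.val ⁻¹' D) where
  nonempty := by
    obtain ⟨x, hx⟩ := h.nonempty
    exact ⟨⟨x, Set.disjoint_left.1 hd hx⟩, hx⟩
  closed := fun x hx y hxy => h.closed x.1 hx y.1 hxy
  minimal := by
    intro D' hD' hne hcl
    have key := h.minimal (Subtype.val '' D') (by rintro _ ⟨x, hx, rfl⟩; exact hD' hx)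
      (hne.image _) (by
        rintro _ ⟨x, hx, rfl⟩ y hxy
        exact ⟨⟨y, Set.disjoint_left.1 hd (h.closed _ (hD' hx) _ hxy)⟩, hcl x hx _ hxy, rfl⟩)
    rw [← key, Set.preimage_image_eq _ Subtype.val_injective]

theorem ncard_preimage_compl {D K : Set V} (hd : Disjoint D K) :
    (Subtype.val ⁻¹' D : Set ↥(Kᶜ)).ncard = D.ncard := by
  rw [← Set.ncard_image_of_injective _ Subtype.val_injective, Subtype.image_preimage_coe]
  congr 1
  exact Set.inter_eq_right.2 fun x hx => Set.disjoint_left.1 hd hx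

theorem Treeish.preimage {G : SimpleGraph V} {D K : Set V} (h : Treeish G D) :
    Treeish (G.induce K) (Subtype.val ⁻¹' D) := by
  intro Z hZ hne
  obtain ⟨_, ⟨x, hx, rfl⟩, hx'⟩ := h (Subtype.val '' Z)
    (by rintro _ ⟨x, hx, rfl⟩; exact hZ hx) (hne.image _)
  exact ⟨x, hx, fun y hy z hz hxy hxz =>
    Subtype.ext (hx' _ ⟨y, hy, rfl⟩ _ ⟨z, hz, rfl⟩ hxy hxz)⟩

theorem IsComp.disjoint {G : SimpleGraph V} {D E : Set V} (h : IsComp G D) (h' : IsComp G E)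
    (hne : D ≠ E) : Disjoint D E := by
  rw [Set.disjoint_iff_inter_eq_empty]
  by_contra hc
  have hcl : Closed G (D ∩ E) := fun x hx y hxy =>
    ⟨h.closed x hx.1 y hxy, h'.closed x hx.2 y hxy⟩
  have hn := Set.nonempty_iff_ne_empty.2 hc
  exact hne ((h.minimal _ Set.inter_subset_left hn hcl).symm.trans
    (h'.minimal _ Set.inter_subset_right hn hcl))

end Components

section LowerBound

variable {gad : ∀ ρ : ℕ, Gadget (ρ + 1)} {I : Set (ℕ × ℕ)} {V : Type}

theorem Allowed.closed_range {G : SimpleGraph V} (h : Allowed gad I G) {i : ℕ × ℕ} (hi : i ∈ I)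
    {f : ZMod (cl i) → V} (hf : Cyc G (cl i) f) : Closed G (Set.range f) := by
  rintro _ ⟨k, rfl⟩ y hy
  by_contra hc
  exact h.2 i hi i hi ⟨f, hf, .inl ⟨k, y, hy, fun h => hc ⟨_, h.symm⟩, fun h => hc ⟨_, h.symm⟩⟩⟩

theorem Cyc.isComp_range {G : SimpleGraph V} {s : ℕ} [NeZero s] {f : ZMod s → V}
    (hf : Cyc G s f) (h : Closed G (Set.range f)) : IsComp G (Set.range f) where
  nonempty := ⟨f 0, 0, rfl⟩
  closed := h
  minimal := by
    rintro D hD ⟨x, hx⟩ hcl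
    obtain ⟨k, rfl⟩ := hD hx
    exact hD.antisymm (hf.range_subset hcl hx)

theorem Allowed.addE_of_not_bad [Finite V] {G : SimpleGraph V} (hI : ∀ i ∈ I, i.2 ≤ i.1)
    (h : Allowed gad I G) {i : ℕ × ℕ} (hi : i ∈ I) {f : ZMod (cl i) → V} (hf : Cyc G (cl i) f)
    {D : Set V} (hD : Closed G D) {u v : ↥((Set.range f)ᶜ)} (hv : v.1 ∉ D) (hu : u.1 ∈ D)
    (hbad : ¬ (gad i.1).Bad (addE (G.induce (Set.range f)ᶜ) v u)) :
    Allowed gad I (addE G v.1 u.1) := by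
  have hcyc : ∀ {s : ℕ} {g : ZMod s → V}, 3 ≤ s → Cyc (addE G v.1 u.1) s g → Cyc G s g :=
    fun hs hg => (addE_comm G v.1 u.1 ▸ hg).of_addE hs hD hu hv
  have h3 : ∀ j : ℕ × ℕ, 3 ≤ cl j := fun j => by have := four_le_cl j; omega
  refine ⟨fun ⟨g, hg⟩ => h.1 ⟨g, hcyc le_rfl hg⟩, ?_⟩
  rintro i' hi' j hj ⟨g, hg, hviol⟩
  replace hg := hcyc (h3 _) hg
  have hcg := h.closed_range hi' hg
  have hcf := h.closed_range hi hf
  obtain ⟨a, b, hab⟩ : ∃ a b, f a = g b := by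
    by_contra hc
    push Not at hc
    exact h.2 i hi i' hi' ⟨f, hf, .inr (.inl ⟨g, hg, hc⟩)⟩
  have hr : Set.range g = Set.range f :=
    (hg.range_subset hcf (i := b) ⟨a, hab⟩).antisymm (hf.range_subset hcg (i := a) ⟨b, hab.symm⟩)
  have hii : i' = i := by
    apply cl_inj (hI _ hi') (hI _ hi)
    rw [← ncard_range_zmod hg.1, ← ncard_range_zmod hf.1, hr]
  subst hii
  rcases hviol with ⟨k, y, h1, h2, h3⟩ | ⟨g', hg', hd⟩ | hb
  · rcases addE_adj.1 h1 with h1 | ⟨-, ⟨h1, -⟩ | ⟨h1, -⟩⟩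
    · exact h.2 i' hi' j hj ⟨g, hg, .inl ⟨k, y, h1, h2, h3⟩⟩
    · exact v.2 (hr.le ⟨k, h1⟩)
    · exact u.2 (hr.le ⟨k, h1⟩)
  · exact h.2 i' hi' j hj ⟨g, hg, .inr (.inl ⟨g', hcyc (h3 _) hg', hd⟩)⟩
  · rw [hr] at hb
    refine hbad ((gad i'.1).bad_mono (Contains.of_le ?_) hb)
    intro x y hxy
    rcases addE_adj.1 (SimpleGraph.induce_adj.1 hxy) with h1 | ⟨h1, h2⟩
    · exact addE_adj.2 (.inl h1)
    · refine addE_adj.2 (.inr ⟨fun h => h1 (congrArg Subtype.val h), ?_⟩)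
      simpa only [Subtype.ext_iff] using h2

theorem exists_cyc_of_saturated [Finite V] {G : SimpleGraph V}
    (h : FamSaturated (fam gad I) G) {D : Set V} (hD : Closed G D) {u v : V} (hu : u ∈ D)
    (hv : v ∉ D) : ∃ i ∈ I, ∃ f, Cyc G (cl i) f := by
  by_contra hc
  push Not at hc
  rw [famSaturated_iff] at h
  refine h.2 u v (by rintro rfl; exact hv hu) (fun h => hv (hD _ hu _ h)) ⟨?_, ?_⟩
  · rintro ⟨f, hf⟩
    exact h.1.1 ⟨f, hf.of_addE le_rfl hD hu hv⟩
  · rintro i hi j hj ⟨f, hf, -⟩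
    exact hc i hi f (hf.of_addE (by have := four_le_cl i; omega) hD hu hv)

theorem card_eq_sum_components [Finite V] (G : SimpleGraph V) [Fintype G.ConnectedComponent] :
    Nat.card V = ∑ C : G.ConnectedComponent, C.supp.ncard := by
  have e : V ≃ Σ C : G.ConnectedComponent, C.supp :=
    (Equiv.sigmaFiberEquiv G.connectedComponentMk).symm
  rw [Nat.card_congr e, Nat.card_sigma]
  rfl

/-- Sizes for which the residue classes may not be prescribed freely. -/
def smallSizes : Set ℕ := {1, 2, 3, 4, 5, 7}

theorem exists_index_of_two_trees [Finite V] {G : SimpleGraph V} (hI : ∀ i ∈ I, i.2 ≤ i.1)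
    (hstd : ∀ ρ, ρ + 1 ∉ smallSizes → (gad ρ).Std) (h : FamSaturated (fam gad I) G)
    {C₁ C₂ : G.ConnectedComponent} (hne : C₁ ≠ C₂) (h₁ : C₁.toSimpleGraph.IsTree)
    (h₂ : C₂.toSimpleGraph.IsTree) (hcard : C₁.supp.ncard = C₂.supp.ncard) :
    ∃ i ∈ I, i.1 + 1 ≤ C₁.supp.ncard ∧
      (i.1 + 1 ∈ smallSizes ∨ Nat.card V % (i.1 + 1) = i.2) := by
  classical
  have ht₁ : Treeish G C₁.supp := treeish_of_isAcyclic h₁.isAcyclic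
  have ht₂ : Treeish G C₂.supp := treeish_of_isAcyclic h₂.isAcyclic
  have hsupp : ∀ {C C' : G.ConnectedComponent}, C ≠ C' → C.supp ≠ C'.supp :=
    fun hn he => hn (SimpleGraph.ConnectedComponent.supp_injective he)
  obtain ⟨u₀, hu₀⟩ := C₂.isComp.nonempty
  obtain ⟨v₀, hv₀⟩ := C₁.isComp.nonempty
  have hdis := C₁.isComp.disjoint C₂.isComp (hsupp hne)
  obtain ⟨i, hi, f, hf⟩ := exists_cyc_of_saturated h C₂.isComp.closed hu₀
    (Set.disjoint_left.1 hdis hv₀)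
  have hs := famSaturated_iff.1 h
  have hK := hf.isComp_range (hs.1.closed_range hi hf)
  have h3 : 3 ≤ cl i := by have := four_le_cl i; omega
  have hKne : ∀ {C : G.ConnectedComponent}, Treeish G C.supp → C.supp ≠ Set.range f :=
    fun hC he => hf.not_treeish h3 hC he.ge
  have hbad : ¬ (gad i.1).Bad (G.induce (Set.range f)ᶜ) :=
    fun hb => hs.1.2 i hi i hi ⟨f, hf, .inr (.inr hb)⟩
  have hno : ∀ C : G.ConnectedComponent, C ≠ C₂ → ¬ ∃ v ∈ (Subtype.val ⁻¹' C.supp :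
      Set ↥((Set.range f)ᶜ)), ∃ u ∈ (Subtype.val ⁻¹' C₂.supp : Set ↥((Set.range f)ᶜ)),
      ¬ (gad i.1).Bad (addE (G.induce (Set.range f)ᶜ) v u) := by
    rintro C hC ⟨v, hv, u, hu, hb⟩
    have hd := C.isComp.disjoint C₂.isComp (hsupp hC)
    have hv' : v.1 ∉ C₂.supp := Set.disjoint_left.1 hd hv
    refine hs.2 v.1 u.1 (fun he => hv' (he ▸ hu)) (fun ha => hv' ?_)
      (hs.1.addE_of_not_bad hI hi hf C₂.isComp.closed hv' hu hb)
    exact C₂.isComp.closed _ hu _ ha.symm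
  have hd₂ := C₂.isComp.disjoint hK (hKne ht₂)
  have hd₁ := C₁.isComp.disjoint hK (hKne ht₁)
  refine ⟨i, hi, ?_⟩
  by_cases hsm : i.1 + 1 ∈ smallSizes
  · refine ⟨?_, .inl hsm⟩
    by_contra hlt
    refine hno C₁ hne ((gad i.1).join_full hbad _ _ (hdis.preimage _) (C₁.isComp.preimage hd₁)
      (C₂.isComp.preimage hd₂) ht₁.preimage ht₂.preimage ?_ ?_)
    · rw [ncard_preimage_compl hd₁, ncard_preimage_compl hd₂, hcard]
    · rw [ncard_preimage_compl hd₁]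
      omega
  · have hall : ∀ C : G.ConnectedComponent, C.supp ≠ Set.range f → C ≠ C₂ →
        C.supp.ncard = i.1 + 1 := by
      intro C hC hC2
      by_contra hn
      have hd := C.isComp.disjoint hK hC
      refine hno C hC2 (hstd i.1 hsm hbad _ _
        ((C.isComp.disjoint C₂.isComp (hsupp hC2)).preimage _) (C.isComp.preimage hd)
        (C₂.isComp.preimage hd₂) ht₂.preimage ?_)
      rwa [ncard_preimage_compl hd]
    have hq := hall C₁ (hKne ht₁) hne
    have hall' : ∀ C : G.ConnectedComponent, C.supp ≠ Set.range f → C.supp.ncard = i.1 + 1 := by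
      intro C hC
      by_cases hC2 : C = C₂
      · rw [hC2, ← hcard, hq]
      · exact hall C hC hC2
    refine ⟨hq.ge, .inr ?_⟩
    let C₀ := G.connectedComponentMk (f 0)
    have hC₀ : C₀.supp = Set.range f := by
      by_contra hn
      exact Set.disjoint_left.1 (C₀.isComp.disjoint hK hn) (rfl : f 0 ∈ C₀.supp) ⟨0, rfl⟩
    have := Fintype.ofFinite G.ConnectedComponent
    rw [card_eq_sum_components G, ← Finset.add_sum_erase _ _ (Finset.mem_univ C₀), hC₀,
      ncard_range_zmod hf.1, Finset.sum_congr rfl (g := fun _ => i.1 + 1)]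
    · rw [Finset.sum_const, smul_eq_mul, cl]
      rw [show (i.1 + 1) * (i.1 + 4) + i.2 + (Finset.univ.erase C₀).card * (i.1 + 1) =
        i.2 + (i.1 + 1) * (i.1 + 4 + (Finset.univ.erase C₀).card) by ring,
        Nat.add_mul_mod_self_left]
      exact Nat.mod_eq_of_lt (Nat.lt_succ_of_le (hI i hi))
    · intro C hC
      apply hall'
      intro he
      exact (Finset.ne_of_mem_erase hC) (SimpleGraph.ConnectedComponent.supp_injective
        (he.trans hC₀.symm))

end LowerBound

section Counting

variable {V : Type}

theorem ncard_supp_le [Finite V] {G : SimpleGraph V} (C : G.ConnectedComponent)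
    [Decidable C.toSimpleGraph.IsTree] :
    C.supp.ncard ≤ Nat.card C.toSimpleGraph.edgeSet +
      if C.toSimpleGraph.IsTree then 1 else 0 := by
  have hc := C.connected_toSimpleGraph
  have h1 := hc.card_vert_le_card_edgeSet_add_one
  have h2 : Nat.card C = C.supp.ncard := rfl
  split_ifs with h
  · omega
  · rw [SimpleGraph.isTree_iff_connected_and_card] at h
    have : ¬ (Nat.card C.toSimpleGraph.edgeSet + 1 = Nat.card C) := fun h' => h ⟨hc, h'⟩
    omega

theorem sum_card_edgeSet_le [Finite V] (G : SimpleGraph V) [Fintype G.ConnectedComponent] :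
    ∑ C : G.ConnectedComponent, Nat.card C.toSimpleGraph.edgeSet ≤ Nat.card G.edgeSet := by
  rw [← Nat.card_sigma]
  have hmem : ∀ (C : G.ConnectedComponent) (e : Sym2 C), e ∈ C.toSimpleGraph.edgeSet →
      e.map Subtype.val ∈ G.edgeSet := by
    intro C e
    induction e using Sym2.ind with
    | _ x y => exact fun h => h
  refine Nat.card_le_card_of_injective (fun p => ⟨p.2.1.map Subtype.val, hmem _ _ p.2.2⟩) ?_
  rintro ⟨C, e, he⟩ ⟨C', e', he'⟩ h
  simp only [Subtype.mk.injEq] at h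
  have hC : C = C' := by
    induction e using Sym2.ind with
    | _ x y =>
      have hx : x.1 ∈ e'.map Subtype.val := by rw [← h]; simp
      obtain ⟨z, -, hz⟩ := Sym2.mem_map.1 hx
      have h1 : G.connectedComponentMk x.1 = C := x.2
      have h2 : G.connectedComponentMk z.1 = C' := z.2
      rw [← h1, ← h2, hz]
  subst hC
  have := Sym2.map.injective Subtype.val_injective h
  subst this
  rfl

theorem card_le_card_edgeSet_add_trees [Finite V] (G : SimpleGraph V) :
    Nat.card V ≤ Nat.card G.edgeSet +
      {C : G.ConnectedComponent | C.toSimpleGraph.IsTree}.ncard := by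
  classical
  have := Fintype.ofFinite G.ConnectedComponent
  rw [card_eq_sum_components G]
  refine (Finset.sum_le_sum fun C _ => ncard_supp_le C).trans ?_
  rw [Finset.sum_add_distrib, Finset.sum_boole, Set.ncard_eq_toFinset_card']
  refine add_le_add (sum_card_edgeSet_le G) ?_
  simp

theorem mul_card_trees_le [Finite V] (G : SimpleGraph V) (r : ℕ)
    (h : ∀ C₁ C₂ : G.ConnectedComponent, C₁ ≠ C₂ → C₁.toSimpleGraph.IsTree →
      C₂.toSimpleGraph.IsTree → C₁.supp.ncard = C₂.supp.ncard → r ≤ C₁.supp.ncard) :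
    r * {C : G.ConnectedComponent | C.toSimpleGraph.IsTree}.ncard ≤ r * r + Nat.card V := by
  classical
  have := Fintype.ofFinite G.ConnectedComponent
  set T := {C : G.ConnectedComponent | C.toSimpleGraph.IsTree}
  set A := {C ∈ T | C.supp.ncard < r}
  set B := {C : G.ConnectedComponent | r ≤ C.supp.ncard}
  have hT : T.ncard ≤ A.ncard + B.ncard := by
    refine (Set.ncard_le_ncard ?_ (Set.toFinite _)).trans (Set.ncard_union_le A B)
    intro C hC
    rcases lt_or_ge C.supp.ncard r with h1 | h1
    · exact .inl ⟨hC, h1⟩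
    · exact .inr h1
  have hA : A.ncard ≤ r := by
    have := Set.ncard_le_ncard_of_injOn (s := A) (t := Set.Iio r)
      (fun C : G.ConnectedComponent => C.supp.ncard) (fun C hC => hC.2) (by
        intro C hC C' hC' he
        by_contra hne
        exact absurd (h C C' hne hC.1 hC'.1 he) (not_le.2 hC.2)) (Set.finite_Iio r)
    simpa [Set.ncard_eq_toFinset_card'] using this
  have hB : r * B.ncard ≤ Nat.card V := by
    rw [card_eq_sum_components G, Set.ncard_eq_toFinset_card', mul_comm, ← smul_eq_mul]
    refine (Finset.card_nsmul_le_sum _ (fun C => C.supp.ncard) r ?_).trans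
      (Finset.sum_le_sum_of_subset (Finset.subset_univ _))
    intro C hC
    simpa [B] using hC
  calc r * T.ncard ≤ r * (A.ncard + B.ncard) := Nat.mul_le_mul_left _ hT
    _ = r * A.ncard + r * B.ncard := mul_add ..
    _ ≤ _ := add_le_add (Nat.mul_le_mul_left _ hA) hB

end Counting

section Bounds

variable {gad : ∀ ρ : ℕ, Gadget (ρ + 1)} {I : Set (ℕ × ℕ)} {V : Type}

theorem exists_saturated (gad : ∀ ρ : ℕ, Gadget (ρ + 1)) (I : Set (ℕ × ℕ)) (V : Type) [Finite V] :
    ∃ G : SimpleGraph V, FamSaturated (fam gad I) G := by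
  have hbot : Allowed gad I (⊥ : SimpleGraph V) :=
    ⟨fun ⟨_, hf⟩ => hf.2 0, fun _ _ _ _ ⟨_, hf, _⟩ => hf.2 0⟩
  obtain ⟨G, hG⟩ := (Set.toFinite {G : SimpleGraph V | Allowed gad I G}).exists_maximal ⟨_, hbot⟩
  refine ⟨G, famSaturated_iff.2 ⟨hG.prop, fun u v huv hadj hal => hadj ?_⟩⟩
  exact hG.le_of_ge hal (le_addE G u v) (addE_adj.2 (.inr ⟨huv, .inl ⟨rfl, rfl⟩⟩))

theorem exists_saturated_card_eq_sat (gad : ∀ ρ : ℕ, Gadget (ρ + 1)) (I : Set (ℕ × ℕ)) (n : ℕ) :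
    ∃ G : SimpleGraph (Fin n), FamSaturated (fam gad I) G ∧
      Nat.card G.edgeSet = sat n (fam gad I) := by
  obtain ⟨G, hG⟩ := exists_saturated gad I (Fin n)
  exact Nat.sInf_mem (s := {m | ∃ G : SimpleGraph (Fin n),
    FamSaturated (fam gad I) G ∧ Nat.card G.edgeSet = m}) ⟨_, G, hG, rfl⟩

theorem sat_le_sq (gad : ∀ ρ : ℕ, Gadget (ρ + 1)) (I : Set (ℕ × ℕ)) (n : ℕ) :
    sat n (fam gad I) ≤ n * n := by
  obtain ⟨G, -, hG⟩ := exists_saturated_card_eq_sat gad I n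
  rw [← hG]
  refine (Nat.card_le_card_of_injective _ Subtype.val_injective).trans ?_
  have := Nat.card_le_card_of_surjective (fun p : Fin n × Fin n => s(p.1, p.2))
    (fun e => by
      induction e using Sym2.ind with
      | _ x y => exact ⟨(x, y), rfl⟩)
  simpa using this

theorem FamSaturated.of_iso [Finite V] {W : Type} [Finite W] {G : SimpleGraph V}
    {H : SimpleGraph W} (e : G ≃g H) (h : FamSaturated (fam gad I) G) :
    FamSaturated (fam gad I) H := by
  rw [famSaturated_iff] at *
  refine ⟨h.1.mono (contains_of_iso e.symm), fun u v huv hadj hal => ?_⟩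
  refine h.2 (e.symm u) (e.symm v) (by simpa using huv)
    (fun ha => hadj (by simpa using e.map_rel_iff.2 ha)) (hal.mono ?_)
  refine ⟨e.toEquiv.toEmbedding, fun a b hab => ?_⟩
  rcases addE_adj.1 hab with h1 | ⟨h1, h2⟩
  · exact addE_adj.2 (.inl (e.map_rel_iff.2 h1))
  · refine addE_adj.2 (.inr ⟨fun h => h1 (e.injective h), ?_⟩)
    refine h2.imp ?_ ?_ <;>
    · rintro ⟨rfl, rfl⟩
      simp

theorem sat_le_of_saturated [Finite V] {G : SimpleGraph V}
    (h : FamSaturated (fam gad I) G) : sat (Nat.card V) (fam gad I) ≤ Nat.card G.edgeSet := by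
  obtain ⟨H, ⟨e⟩⟩ := exists_fin_copy G
  refine Nat.sInf_le ⟨H, h.of_iso e, (Nat.card_congr ?_).symm⟩
  exact e.mapEdgeSet

theorem mul_le_mul_sat_add (hI : ∀ i ∈ I, i.2 ≤ i.1)
    (hstd : ∀ ρ, ρ + 1 ∉ smallSizes → (gad ρ).Std) (n r : ℕ)
    (h : ∀ i ∈ I, i.1 + 1 < r → i.1 + 1 ∉ smallSizes ∧ n % (i.1 + 1) ≠ i.2) :
    r * n ≤ r * sat n (fam gad I) + r * r + n := by
  obtain ⟨G, hG, hcard⟩ := exists_saturated_card_eq_sat gad I n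
  have h1 := card_le_card_edgeSet_add_trees G
  have h2 := mul_card_trees_le G r (fun C₁ C₂ hne ht₁ ht₂ he => by
    by_contra hlt
    obtain ⟨i, hi, hle, hor⟩ := exists_index_of_two_trees hI hstd hG hne ht₁ ht₂ he
    have := h i hi (by omega)
    rw [Nat.card_fin] at hor
    tauto)
  rw [Nat.card_fin] at h1 h2
  rw [← hcard]
  calc r * n ≤ r * _ := Nat.mul_le_mul_left _ h1
    _ ≤ _ := by rw [mul_add]; omega

end Bounds

section Construction

variable {gad : ∀ ρ : ℕ, Gadget (ρ + 1)} {I : Set (ℕ × ℕ)}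

/-- The union of `m` copies of the tree of a gadget and a cycle, as a functional graph. -/
def modelMap {r : ℕ} (g : Gadget r) (m s : ℕ) :
    (Fin m × g.τ) ⊕ ZMod s → (Fin m × g.τ) ⊕ ZMod s :=
  Sum.map (copies m g.par) (· + 1)

theorem modelMap_adj_inl {r : ℕ} {g : Gadget r} {m s : ℕ} {x : Fin m × g.τ} {y} :
    (funG (modelMap g m s)).Adj (.inl x) y ↔ ∃ z, y = .inl z ∧ (funG (copies m g.par)).Adj x z := by
  rcases y with y | y <;> simp [funG, modelMap]

theorem modelMap_adj_inr {r : ℕ} {g : Gadget r} {m s : ℕ} (hs : 3 ≤ s) {x : ZMod s} {y} :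
    (funG (modelMap g m s)).Adj (.inr x) y ↔ y = .inr (x + 1) ∨ y = .inr (x - 1) := by
  have : Nontrivial (ZMod s) := by
    have : Fact (1 < s) := ⟨by omega⟩
    infer_instance
  rcases y with y | y
  · simp [funG, modelMap]
  · simp only [funG, modelMap, Sum.map_inr, Sum.inr.injEq, ne_eq]
    constructor
    · rintro ⟨-, h | h⟩
      · exact .inl h.symm
      · exact .inr (by rw [← h]; ring)
    · rintro (h | h)
      · subst h
        simp
      · subst h
        exact ⟨by simp [eq_comm (a := x)], .inr (by ring)⟩

theorem card_edgeSet_modelMap_le {r : ℕ} (g : Gadget r) (m s : ℕ) [NeZero s] :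
    Nat.card (funG (modelMap g m s)).edgeSet ≤ m * (r - 1) + s := by
  classical
  refine (card_edgeSet_funG_le _).trans ?_
  have hsub : {x | modelMap g m s x ≠ x} ⊆
      Sum.inl '' (Set.univ ×ˢ {g.root}ᶜ) ∪ Sum.inr '' Set.univ := by
    rintro (⟨i, a⟩ | x) hx
    · refine .inl ⟨(i, a), ⟨trivial, ?_⟩, rfl⟩
      rintro rfl
      exact hx (by simp [modelMap, copies, g.par_root])
    · exact .inr ⟨x, trivial, rfl⟩
  refine (Set.ncard_le_ncard hsub (Set.toFinite _)).trans ((Set.ncard_union_le _ _).trans ?_)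
  rw [Set.ncard_image_of_injective _ Sum.inl_injective,
    Set.ncard_image_of_injective _ Sum.inr_injective, Set.ncard_univ, Nat.card_zmod,
    Set.ncard_prod, Set.ncard_univ, Nat.card_fin, Set.ncard_compl, Set.ncard_singleton,
    Nat.card_eq_fintype_card, g.card_τ]

theorem treeish_modelMap {r : ℕ} (g : Gadget r) (m s : ℕ) [NeZero s] :
    Treeish (funG (modelMap g m s)) (Set.range Sum.inl) := by
  refine treeish_funG (Sum.elim (fun x => g.rank x.2) 0) ?_
  rintro _ ⟨⟨i, a⟩, rfl⟩ hx
  exact g.rank_lt a (fun h => hx (by simp [modelMap, copies, h]))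

theorem closed_inl_modelMap {r : ℕ} (g : Gadget r) (m s : ℕ) :
    Closed (funG (modelMap g m s)) (Set.range Sum.inl) := by
  rintro _ ⟨x, rfl⟩ y hy
  obtain ⟨z, rfl, -⟩ := modelMap_adj_inl.1 hy
  exact ⟨z, rfl⟩

theorem modelMap_saturated (hI : ∀ i ∈ I, i.2 ≤ i.1) {i : ℕ × ℕ} (hi : i ∈ I) (m : ℕ) :
    FamSaturated (fam gad I) (funG (modelMap (gad i.1) m (cl i))) := by
  classical
  set g := gad i.1 with hg
  set G := funG (modelMap g m (cl i)) with hG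
  have hcl : 3 ≤ cl i := by have := four_le_cl i; omega
  have hright : ∀ {s : ℕ} [NeZero s] {f : ZMod s → _}, 3 ≤ s → Cyc G s f →
      ∀ k, ∃ x, f k = .inr x := by
    intro s _ f hs hf k
    rcases hk : f k with x | x
    · exact absurd (hf.range_subset (closed_inl_modelMap g m (cl i)) (i := k) ⟨x, hk.symm⟩)
        (hf.not_treeish hs (treeish_modelMap g m (cl i)))
    · exact ⟨x, rfl⟩
  have hnbr : ∀ {s : ℕ} [NeZero s] {f : ZMod s → _}, 3 ≤ s → Cyc G s f → ∀ k y, G.Adj (f k) y →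
      y = f (k + 1) ∨ y = f (k - 1) := by
    intro s _ f hs hf k y hy
    obtain ⟨x, hx⟩ := hright hs hf k
    have h1 := hf.2 k
    have h2 := hf.adj_pred k
    have h3 : f (k + 1) ≠ f (k - 1) := fun h => ZMod.add_one_ne_sub_one hs k (hf.1 h)
    rw [hx, modelMap_adj_inr hcl] at hy h1 h2
    grind
  have hrange : ∀ {s : ℕ} [NeZero s] {f : ZMod s → _}, 3 ≤ s → Cyc G s f →
      Set.range f = Set.range Sum.inr := by
    intro s _ f hs hf
    apply Set.Subset.antisymm
    · rintro _ ⟨k, rfl⟩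
      obtain ⟨x, hx⟩ := hright hs hf k
      exact ⟨x, hx.symm⟩
    · obtain ⟨x, hx⟩ := hright hs hf 0
      rintro _ ⟨z, rfl⟩
      refine ZMod.forall_of_add_one (p := fun z => Sum.inr z ∈ Set.range f) x ⟨0, hx⟩ ?_ z
      rintro z ⟨k, hk⟩
      rcases hnbr hs hf k (.inr (z + 1)) (by rw [hk, modelMap_adj_inr hcl]; simp) with h | h
      · exact ⟨_, h.symm⟩
      · exact ⟨_, h.symm⟩
  have hcard : ∀ {s : ℕ} [NeZero s] {f : ZMod s → _}, 3 ≤ s → Cyc G s f → s = cl i := by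
    intro s _ f hs hf
    rw [← ncard_range_zmod hf.1, hrange hs hf, ncard_range_zmod Sum.inr_injective]
  rw [famSaturated_iff]
  constructor
  · constructor
    · rintro ⟨f, hf⟩
      have h1 := hcard le_rfl hf
      have := four_le_cl i
      omega
    · rintro i' hi' j - ⟨f, hf, h⟩
      have h3 : ∀ j : ℕ × ℕ, 3 ≤ cl j := fun j => by have := four_le_cl j; omega
      have hii := cl_inj (hI _ hi') (hI _ hi) (hcard (h3 _) hf)
      subst hii
      rcases h with ⟨k, y, h1, h2, h3'⟩ | ⟨f', hf', hd⟩ | h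
      · exact (hnbr hcl hf k y h1).elim h2 h3'
      · obtain ⟨x, hx⟩ := hright (h3 _) hf' 0
        have : Sum.inr x ∈ Set.range f := by rw [hrange hcl hf]; exact ⟨x, rfl⟩
        obtain ⟨a, ha⟩ := this
        exact hd a 0 (ha.trans hx.symm)
      · rw [hrange hcl hf] at h
        refine g.not_bad m (g.bad_mono ?_ h)
        have hl : ∀ x : ↥((Set.range Sum.inr : Set ((Fin m × g.τ) ⊕ ZMod (cl i')))ᶜ),
            ∃ y, x.1 = .inl y := by
          rintro ⟨x | x, hx⟩
          · exact ⟨x, rfl⟩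
          · exact absurd ⟨x, rfl⟩ hx
        choose φ hφ using hl
        refine ⟨⟨φ, fun a b hab => Subtype.ext (by rw [hφ, hφ, hab])⟩, fun a b hab => ?_⟩
        have hab' : G.Adj a.1 b.1 := hab
        rw [hφ, hφ, modelMap_adj_inl] at hab'
        obtain ⟨z, hz, hz'⟩ := hab'
        rw [Sum.inl.injEq] at hz
        rwa [← hz] at hz'
  · have hcyc : ∀ u v, Cyc (addE G u v) (cl i) Sum.inr := fun u v =>
      ⟨Sum.inr_injective, fun k => le_addE _ _ _ ((modelMap_adj_inr hcl).2 (.inl rfl))⟩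
    have hr : ∀ (x : ZMod (cl i)) v, Sum.inr x ≠ v → ¬ G.Adj (.inr x) v →
        Viol gad i i (addE G (.inr x) v) := by
      intro x v hne hadj
      rw [modelMap_adj_inr hcl, not_or] at hadj
      exact ⟨Sum.inr, hcyc _ _, .inl ⟨x, v, addE_adj.2 (.inr ⟨hne, .inl ⟨rfl, rfl⟩⟩), hadj⟩⟩
    intro u v huv hadj hal
    refine hal.2 i hi i hi ?_
    rcases u with u | u
    · rcases v with v | v
      · refine ⟨Sum.inr, hcyc _ _, .inr (.inr (g.bad_mono ?_ (g.bad_add m u v ?_ ?_)))⟩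
        · refine ⟨⟨fun x => ⟨.inl x, by simp⟩, fun a b hab => by simpa using hab⟩, ?_⟩
          intro a b hab
          change (addE G (.inl u) (.inl v)).Adj (.inl a) (.inl b)
          rw [addE_adj] at hab ⊢
          rcases hab with h | h
          · exact .inl (modelMap_adj_inl.2 ⟨b, rfl, h⟩)
          · exact .inr (by simpa using h)
        · simpa using huv
        · exact fun h => hadj (modelMap_adj_inl.2 ⟨v, rfl, h⟩)
      · rw [addE_comm]
        exact hr v _ huv.symm (fun h => hadj h.symm)
    · exact hr u v huv hadj

theorem mul_sat_le (hI : ∀ i ∈ I, i.2 ≤ i.1) (ρ n : ℕ) (hi : (ρ, n % (ρ + 1)) ∈ I) :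
    (ρ + 1) * sat n (fam gad I) ≤ ρ * n + (ρ + 1) * ((ρ + 1) * (ρ + 5)) ^ 2 := by
  set i := (ρ, n % (ρ + 1)) with hidef
  have hle := hI i hi
  have hs : cl i ≤ (ρ + 1) * (ρ + 5) := by
    simp only [cl, hidef] at *
    nlinarith
  set S := (ρ + 1) * (ρ + 5) with hS
  have hS1 : 1 ≤ S := by nlinarith [Nat.zero_le ρ]
  rcases lt_or_ge n (cl i) with hn | hn
  · have h1 := sat_le_sq gad I n
    have h2 : n * n ≤ S ^ 2 := by nlinarith
    have h3 := Nat.mul_le_mul_left (ρ + 1) (h1.trans h2)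
    omega
  · have hdvd : (ρ + 1) ∣ n - cl i := by
      rw [← Nat.modEq_iff_dvd' hn]
      unfold Nat.ModEq cl
      rw [hidef]
      simp
    obtain ⟨m, hm⟩ := hdvd
    have h1 := sat_le_of_saturated (modelMap_saturated (gad := gad) hI hi m)
    have h2 := card_edgeSet_modelMap_le (gad i.1) m (cl i)
    have hcard : Nat.card ((Fin m × (gad i.1).τ) ⊕ ZMod (cl i)) = n := by
      rw [Nat.card_sum, Nat.card_prod, Nat.card_fin, Nat.card_zmod, Nat.card_eq_fintype_card,
        (gad i.1).card_τ]
      have : i.1 = ρ := rfl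
      rw [this, mul_comm]
      omega
    rw [hcard] at h1
    have h3 : sat n (fam gad I) ≤ m * ρ + cl i := by
      have : i.1 + 1 - 1 = ρ := rfl
      rw [this] at h2
      omega
    have h4 : n = (ρ + 1) * m + cl i := by omega
    have h5 : cl i ≤ S ^ 2 := by nlinarith
    calc (ρ + 1) * sat n (fam gad I) ≤ (ρ + 1) * (m * ρ + cl i) := Nat.mul_le_mul_left _ h3
      _ = ρ * ((ρ + 1) * m) + (ρ + 1) * cl i := by ring
      _ ≤ ρ * n + (ρ + 1) * S ^ 2 := by
        refine add_le_add (Nat.mul_le_mul_left _ (by omega)) (Nat.mul_le_mul_left _ h5)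

end Construction

section FamilyProperties

variable {gad : ∀ ρ : ℕ, Gadget (ρ + 1)} {I : Set (ℕ × ℕ)}

theorem fam_nonempty : (fam gad I).Nonempty :=
  ⟨⟨3, ⊤⟩, ⟨0, 0, fun x => .inl (SimpleGraph.connected_top.preconnected 0 x)⟩,
    .inl ⟨le_rfl, (id : ZMod 3 → ZMod 3), fun _ _ h => h, fun i =>
      (SimpleGraph.top_adj _ _).2 (by change i ≠ i + 1; revert i; decide)⟩⟩

theorem one_le_card_edgeSet_of_adj {V : Type} [Finite V] {G : SimpleGraph V} {x y : V}
    (h : G.Adj x y) : 1 ≤ Nat.card G.edgeSet :=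
  have : Nonempty G.edgeSet := ⟨⟨s(x, y), h⟩⟩
  Nat.card_pos

theorem one_le_card_edgeSet_of_mem_fam : ∀ F ∈ fam gad I, 1 ≤ Nat.card F.2.edgeSet := by
  rintro F ⟨-, ⟨-, f, hf⟩ | ⟨i, -, j, -, -, f, hf, -⟩⟩
  · exact one_le_card_edgeSet_of_adj (hf.2 0)
  · exact one_le_card_edgeSet_of_adj (hf.2 0)

theorem quasiFinite_fam : QuasiFinite (fam gad I) := by
  intro t T _
  refine ⟨2, ?_⟩
  rintro F ⟨⟨a, b, hab⟩, -⟩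
  have hsurj : Function.Surjective (fun β : Bool =>
      F.2.connectedComponentMk (if β then a else b)) := by
    intro C
    induction C using SimpleGraph.ConnectedComponent.ind with
    | _ x =>
      rcases hab x with h | h
      · exact ⟨true, SimpleGraph.ConnectedComponent.sound h⟩
      · exact ⟨false, SimpleGraph.ConnectedComponent.sound h⟩
  refine (Nat.card_le_card_of_injective _ Subtype.val_injective).trans ?_
  simpa using Nat.card_le_card_of_surjective _ hsurj

theorem fam_finite (hI : I.Finite) : (fam gad I).Finite := by
  obtain ⟨N, hN⟩ := (hI.image (bnd gad)).bddAbove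
  have hfin : (Set.range fun p : Σ k : Fin (3 + N + N + 1), SimpleGraph (Fin k) =>
      (⟨p.1, p.2⟩ : (n : ℕ) × SimpleGraph (Fin n))).Finite := Set.finite_range _
  refine hfin.subset ?_
  rintro ⟨k, F⟩ ⟨-, h⟩
  have hk : k < 3 + N + N + 1 := by
    rcases h with ⟨h, -⟩ | ⟨i, hi, j, hj, h, -⟩
    · simp only at h
      omega
    · have h1 := hN ⟨i, hi, rfl⟩
      have h2 := hN ⟨j, hj, rfl⟩
      simp only at h
      omega
  exact ⟨⟨⟨k, hk⟩, F⟩, rfl⟩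

end FamilyProperties

theorem tendsto_sqrt_div : Tendsto (fun n : ℕ => (2 * ((Nat.sqrt n : ℝ) + 1)) / n) atTop (𝓝 0) := by
  have h1 : Tendsto (fun n : ℕ => 2 * (Real.sqrt n)⁻¹ + 2 * ((n : ℝ))⁻¹) atTop (𝓝 (2 * 0 + 2 * 0)) := by
    refine Tendsto.add (Tendsto.const_mul _ ?_) (Tendsto.const_mul _ ?_)
    · exact tendsto_inv_atTop_zero.comp (Real.tendsto_sqrt_atTop.comp tendsto_natCast_atTop_atTop)
    · exact tendsto_inv_atTop_zero.comp tendsto_natCast_atTop_atTop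
  simp only [mul_zero, add_zero] at h1
  refine squeeze_zero (fun n => by positivity) (fun n => ?_) h1
  rcases Nat.eq_zero_or_pos n with rfl | hn
  · simp
  have hn' : (0 : ℝ) < n := by exact_mod_cast hn
  have hs : 0 < Real.sqrt n := Real.sqrt_pos.2 hn'
  have h2 : (Nat.sqrt n : ℝ) ≤ Real.sqrt n := Real.nat_sqrt_le_real_sqrt
  have h3 : (Real.sqrt n)⁻¹ = Real.sqrt n / n := by
    rw [eq_div_iff hn'.ne', inv_mul_eq_iff_eq_mul₀ hs.ne', Real.mul_self_sqrt hn'.le]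
  rw [h3, div_eq_mul_inv, div_eq_mul_inv]
  have : 0 < (n : ℝ)⁻¹ := inv_pos.2 hn'
  nlinarith

theorem stmt10_of_gadgets (gad : ∀ ρ : ℕ, Gadget (ρ + 1))
    (hstd : ∀ ρ, ρ + 1 ∉ smallSizes → (gad ρ).Std) (S : ℕ → Set (Set ℕ))
    (hS : ∀ r : ℕ, 1 ≤ r → ∀ C ∈ S r, ResidueClass r C)
    (h7 : ∀ r ∈ ({1, 2, 3, 4, 5, 7} : Set ℕ), S r = ∅ ∨ S r = {C | ResidueClass r C}) :
    ∃ 𝓕 : GraphFam, 𝓕.Nonempty ∧ (∀ F ∈ 𝓕, 1 ≤ Nat.card F.2.edgeSet) ∧ QuasiFinite 𝓕 ∧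
      (∀ r : ℕ, 1 ≤ r → ∃ K : ℝ, ∀ n : ℕ,
        ((∃ C ∈ S r, n ∈ C) ∧ ∀ q : ℕ, 1 ≤ q → q < r → ∀ C ∈ S q, n ∉ C) →
          |(sat n 𝓕 : ℝ) - (1 - 1 / (r : ℝ)) * n| ≤ K) ∧
      (∃ g : ℕ → ℝ, Tendsto (fun n : ℕ => g n / n) atTop (𝓝 0) ∧
        ∀ n : ℕ, (∀ r : ℕ, 1 ≤ r → ∀ C ∈ S r, n ∉ C) → (n : ℝ) - g n ≤ (sat n 𝓕 : ℝ)) ∧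
      ({r : ℕ | 1 ≤ r ∧ ∃ n : ℕ,
          (∃ C ∈ S r, n ∈ C) ∧ ∀ q : ℕ, 1 ≤ q → q < r → ∀ C ∈ S q, n ∉ C}.Finite →
        𝓕.Finite) := by
  set A := {r : ℕ | 1 ≤ r ∧ ∃ n : ℕ,
    (∃ C ∈ S r, n ∈ C) ∧ ∀ q : ℕ, 1 ≤ q → q < r → ∀ C ∈ S q, n ∉ C} with hA
  set I : Set (ℕ × ℕ) := {i | i.2 ≤ i.1 ∧ {n | n % (i.1 + 1) = i.2} ∈ S (i.1 + 1) ∧ i.1 + 1 ∈ A}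
    with hIdef
  have hI : ∀ i ∈ I, i.2 ≤ i.1 := fun i hi => hi.1
  have hlow : ∀ n r : ℕ, (∀ q : ℕ, 1 ≤ q → q < r → ∀ C ∈ S q, n ∉ C) →
      r * n ≤ r * sat n (fam gad I) + r * r + n := by
    intro n r hn
    refine mul_le_mul_sat_add hI hstd n r fun i hi hir => ⟨fun hsm => ?_, fun hmod => ?_⟩
    · rcases h7 _ hsm with h | h
      · have := hi.2.1
        rw [h] at this
        exact this
      · refine hn (i.1 + 1) (by omega) hir {k | k % (i.1 + 1) = n % (i.1 + 1)} ?_ rfl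
        rw [h]
        exact ⟨_, Nat.mod_lt _ (by omega), rfl⟩
    · exact hn (i.1 + 1) (by omega) hir _ hi.2.1 hmod
  refine ⟨fam gad I, fam_nonempty, one_le_card_edgeSet_of_mem_fam, quasiFinite_fam, ?_, ?_, ?_⟩
  · intro r hr
    obtain ⟨ρ, rfl⟩ : ∃ ρ, r = ρ + 1 := ⟨r - 1, by omega⟩
    refine ⟨(ρ + 1 : ℝ) + (((ρ + 1) * (ρ + 5)) ^ 2 : ℕ), ?_⟩
    rintro n ⟨⟨C, hC, hnC⟩, hq⟩
    have hi : (ρ, n % (ρ + 1)) ∈ I := by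
      obtain ⟨c, hc, rfl⟩ := hS _ hr C hC
      have hnc : n % (ρ + 1) = c := hnC
      refine ⟨Nat.lt_succ_iff.1 (Nat.mod_lt _ (by omega)), ?_, hr, n, ⟨_, hC, hnC⟩, hq⟩
      simp only [hnc]
      exact hC
    have h1 : (((ρ + 1) * n : ℕ) : ℝ) ≤ ((_ : ℕ) : ℝ) := Nat.cast_le.2 (hlow n (ρ + 1) hq)
    have h2 : (((ρ + 1) * sat n (fam gad I) : ℕ) : ℝ) ≤ ((_ : ℕ) : ℝ) :=
      Nat.cast_le.2 (mul_sat_le hI ρ n hi)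
    generalize ((ρ + 1) * (ρ + 5)) ^ 2 = T at h2 ⊢
    push_cast at h1 h2 ⊢
    have hpos : (0 : ℝ) < ρ + 1 := by positivity
    have hT : (0 : ℝ) ≤ T := by positivity
    have hr1 : (1 - 1 / ((ρ : ℝ) + 1)) * n = ρ * n / (ρ + 1) := by
      field_simp
      ring
    rw [hr1, abs_le]
    constructor
    · rw [neg_le_sub_iff_le_add, div_le_iff₀ hpos]
      nlinarith
    · rw [sub_le_iff_le_add, ← sub_le_iff_le_add', le_div_iff₀ hpos]
      nlinarith
  · refine ⟨fun n => 2 * ((Nat.sqrt n : ℝ) + 1), tendsto_sqrt_div, fun n hn => ?_⟩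
    set s := Nat.sqrt n
    have h1 : (((s + 1) * n : ℕ) : ℝ) ≤ ((_ : ℕ) : ℝ) :=
      Nat.cast_le.2 (hlow n (s + 1) fun q hq _ => hn q hq)
    have h2 : ((n : ℕ) : ℝ) ≤ (((s + 1) * (s + 1) : ℕ) : ℝ) :=
      Nat.cast_le.2 (Nat.lt_succ_sqrt n).le
    push_cast at h1 h2
    have hpos : (0 : ℝ) < s + 1 := by positivity
    have : ((s : ℝ) + 1) * n ≤ (s + 1) * (sat n (fam gad I) + 2 * (s + 1)) := by nlinarith
    have := le_of_mul_le_mul_left this hpos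
    linarith
  · intro hfin
    refine fam_finite ?_
    obtain ⟨N, hN⟩ := hfin.bddAbove
    refine ((Set.finite_Iic N).prod (Set.finite_Iic N)).subset ?_
    intro i hi
    have h1 := hN hi.2.2
    have h2 := hi.1
    exact ⟨by simp only [Set.mem_Iic]; omega, by simp only [Set.mem_Iic]; omega⟩

section Star

variable {V W : Type}

theorem Closed.subset_of_preconnected_induce {G : SimpleGraph V} {D S : Set V} (hD : Closed G D)
    (hS : (G.induce S).Preconnected) {x : V} (hx : x ∈ S) (hxD : x ∈ D) : S ⊆ D := by
  intro y hy
  obtain ⟨p⟩ := hS ⟨x, hx⟩ ⟨y, hy⟩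
  have key : ∀ {a b : S}, (G.induce S).Walk a b → a.1 ∈ D → b.1 ∈ D := by
    intro a b p
    induction p with
    | nil => exact id
    | cons h p ih => exact fun ha => ih (hD _ ha _ h)
  exact key p hxD

theorem Cyc.of_triangle {G : SimpleGraph V} {a b c : V} (hab : G.Adj a b) (hbc : G.Adj b c)
    (hca : G.Adj c a) : ∃ f, Cyc G 3 f := by
  refine ⟨(![a, b, c] : Fin 3 → V), ?_, ?_⟩
  · have h1 := hab.ne
    have h2 := hbc.ne
    have h3 := hca.ne
    intro i j
    change Fin 3 at i j
    fin_cases i <;> fin_cases j <;>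
      first | exact fun _ => rfl | simp [h1, h2, h3, h1.symm, h2.symm, h3.symm]
  · intro i
    change Fin 3 at i
    fin_cases i
    · exact hab
    · exact hbc
    · exact hca

/-- Containing a triangle or a connected set of `k` vertices. -/
def StarBad (k : ℕ) (G : SimpleGraph V) : Prop :=
  (∃ f, Cyc G 3 f) ∨ ∃ S : Set V, S.ncard = k ∧ (G.induce S).Preconnected

theorem StarBad.mono {k : ℕ} {G : SimpleGraph V} {H : SimpleGraph W} (h : Contains G H)
    (hb : StarBad k H) : StarBad k G := by
  obtain ⟨φ, hφ⟩ := h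
  rcases hb with ⟨f, hf⟩ | ⟨S, hS, hc⟩
  · exact .inl ⟨_, hf.map φ hφ⟩
  · refine .inr ⟨φ '' S, by rw [Set.ncard_image_of_injective _ φ.injective, hS], ?_⟩
    rintro ⟨_, x, hx, rfl⟩ ⟨_, y, hy, rfl⟩
    let ψ : H.induce S →g G.induce (φ '' S) := ⟨fun x => ⟨φ x.1, x.1, x.2, rfl⟩, fun h => hφ _ _ h⟩
    exact (hc ⟨x, hx⟩ ⟨y, hy⟩).map ψ

theorem StarBad.exists_local {k : ℕ} (hk : k ≠ 0) {G : SimpleGraph V} (h : StarBad k G) :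
    ∃ S : Set V, S.ncard ≤ k + 3 ∧ (∃ a, ∀ x, (G.induce S).Reachable a x) ∧
      StarBad k (G.induce S) := by
  rcases h with ⟨f, hf⟩ | ⟨S, hS, hc⟩
  · have hf' := hf.induce (S := Set.range f) (fun k => ⟨k, rfl⟩)
    refine ⟨Set.range f, ?_, ⟨⟨f 0, 0, rfl⟩, ?_⟩, .inl ⟨_, hf'⟩⟩
    · rw [ncard_range_zmod hf.1]
      omega
    · rintro ⟨_, k, rfl⟩
      exact hf'.reachable k
  · have hne : S.Nonempty := by
      rw [Set.nonempty_iff_ne_empty]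
      rintro rfl
      rw [Set.ncard_empty] at hS
      exact hk hS.symm
    obtain ⟨a, ha⟩ := hne
    refine ⟨S, by omega, ⟨⟨a, ha⟩, fun x => hc _ _⟩, .inr ⟨Set.univ, ?_, ?_⟩⟩
    · rw [Set.ncard_univ, Nat.card_coe_set_eq, hS]
    · intro x y
      let ψ : G.induce S →g (G.induce S).induce Set.univ := ⟨fun x => ⟨x, trivial⟩, fun h => h⟩
      exact (hc x.1 y.1).map ψ

theorem StarBad.join [Finite V] {k : ℕ} {G : SimpleGraph V} (h : ¬ StarBad k G)
    {D₁ D₂ : Set V} (hd : Disjoint D₁ D₂) (h₁ : Closed G D₁) (h₂ : Closed G D₂)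
    (hlt : D₁.ncard + D₂.ncard < k) {v u : V} (hv : v ∈ D₁) (hu : u ∈ D₂) :
    ¬ StarBad k (addE G v u) := by
  rintro (⟨f, hf⟩ | ⟨S, hS, hc⟩)
  · exact h (.inl ⟨f, hf.of_addE le_rfl h₁ hv (Set.disjoint_right.1 hd hu)⟩)
  · have hcl : Closed (addE G v u) (D₁ ∪ D₂) := by
      intro x hx y hxy
      rcases addE_adj.1 hxy with h | ⟨-, ⟨-, rfl⟩ | ⟨-, rfl⟩⟩
      · exact hx.imp (fun hx => h₁ x hx y h) (fun hx => h₂ x hx y h)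
      · exact .inr hu
      · exact .inl hv
    by_cases hx : ∃ x ∈ S, x ∈ D₁ ∪ D₂
    · obtain ⟨x, hxS, hxD⟩ := hx
      have hsub := hcl.subset_of_preconnected_induce hc hxS hxD
      have := (Set.ncard_le_ncard hsub (Set.toFinite _)).trans (Set.ncard_union_le _ _)
      omega
    · push Not at hx
      refine h (.inr ⟨S, hS, ?_⟩)
      have : G.induce S = (addE G v u).induce S := by
        ext x y
        simp only [SimpleGraph.comap_adj, addE_adj, Function.Embedding.subtype_apply]
        constructor
        · exact .inl
        · rintro (h | ⟨-, ⟨h, -⟩ | ⟨h, -⟩⟩)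
          · exact h
          · exact absurd (.inl (h ▸ hv)) (hx x.1 x.2)
          · exact absurd (.inr (h ▸ hu)) (hx x.1 x.2)
      rwa [this]

/-- The gadget whose tree is a star. -/
noncomputable def starGadget (ρ : ℕ) : Gadget (ρ + 1) where
  Bad := StarBad (2 * (ρ + 1))
  size := 2 * (ρ + 1) + 3
  bad_mono := StarBad.mono
  bad_local := StarBad.exists_local (by omega)
  τ := Option (Fin ρ)
  fin := inferInstance
  card_τ := by simp
  par _ := none
  root := none
  par_root := rfl
  rank a := if a = none then 0 else 1
  rank_lt a ha := by simp [Ne.symm ha]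
  not_bad m := by
    rintro (⟨f, hf⟩ | ⟨S, hS, hc⟩)
    · refine hf.not_treeish le_rfl (D := Set.univ)
        (treeish_funG (fun x => if x.2 = none then 0 else 1) ?_) (Set.subset_univ _)
      rintro ⟨i, a⟩ - hx
      have : a ≠ none := by
        rintro rfl
        exact hx rfl
      simp [copies, this]
    · have hne : S.Nonempty := by
        rw [Set.nonempty_iff_ne_empty]
        rintro rfl
        simp at hS
      obtain ⟨⟨i, a⟩, hx⟩ := hne
      have hsub := Closed.subset_of_preconnected_induce (D := Set.range (Prod.mk i))
        (by
          rintro _ ⟨b, rfl⟩ ⟨j, c⟩ hy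
          obtain ⟨rfl, -⟩ := funG_copies_adj.1 hy
          exact ⟨c, rfl⟩) hc hx ⟨a, rfl⟩
      have h1 := Set.ncard_le_ncard hsub (Set.toFinite _)
      rw [← Set.image_univ, Set.ncard_image_of_injective _ (Prod.mk_right_injective i),
        Set.ncard_univ, Nat.card_eq_fintype_card] at h1
      simp only [Fintype.card_option, Fintype.card_fin] at h1
      omega
  bad_add m := by
    rintro ⟨i, a⟩ ⟨j, b⟩ hne hadj
    set G := addE (funG (copies m fun _ : Option (Fin ρ) => none)) (i, a) (j, b) with hG
    have hab : G.Adj (i, a) (j, b) := addE_adj.2 (.inr ⟨hne, .inl ⟨rfl, rfl⟩⟩)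
    have hroot : ∀ l (c : Option (Fin ρ)), c ≠ none → G.Adj (l, c) (l, none) := fun l c hc =>
      addE_adj.2 (.inl ⟨by simpa using hc, .inl rfl⟩)
    by_cases hij : i = j
    · subst hij
      have ha : a ≠ none := by
        rintro rfl
        exact hadj ⟨hne, .inr rfl⟩
      have hb : b ≠ none := by
        rintro rfl
        exact hadj ⟨hne, .inl rfl⟩
      exact .inl (Cyc.of_triangle hab (hroot i b hb) (hroot i a ha).symm)
    · right
      refine ⟨Set.range (Prod.mk i) ∪ Set.range (Prod.mk j), ?_, ?_⟩
      · rw [Set.ncard_union_eq]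
        · rw [← Set.image_univ, ← Set.image_univ,
            Set.ncard_image_of_injective _ (Prod.mk_right_injective i),
            Set.ncard_image_of_injective _ (Prod.mk_right_injective j),
            Set.ncard_univ, Nat.card_eq_fintype_card]
          simp only [Fintype.card_option, Fintype.card_fin]
          omega
        · rw [Set.disjoint_left]
          rintro _ ⟨b, rfl⟩ ⟨c, hc⟩
          exact hij (by simpa using (congrArg Prod.fst hc).symm)
      · set S := Set.range (Prod.mk i) ∪ Set.range (Prod.mk j) with hSdef
        have hi : ∀ c, (i, c) ∈ S := fun c => .inl ⟨c, rfl⟩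
        have hj : ∀ c, (j, c) ∈ S := fun c => .inr ⟨c, rfl⟩
        have ri : ∀ c, (G.induce S).Reachable ⟨(i, c), hi c⟩ ⟨(i, none), hi none⟩ := by
          intro c
          by_cases hc : c = none
          · subst hc
            rfl
          · exact Adj.reachable (hroot i c hc)
        have rj : ∀ c, (G.induce S).Reachable ⟨(j, c), hj c⟩ ⟨(j, none), hj none⟩ := by
          intro c
          by_cases hc : c = none
          · subst hc
            rfl
          · exact Adj.reachable (hroot j c hc)
        have hij' : (G.induce S).Reachable ⟨(j, b), hj b⟩ ⟨(i, a), hi a⟩ :=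
          Adj.reachable (G := G.induce S) hab.symm
        have key : ∀ x : S, (G.induce S).Reachable x ⟨(i, none), hi none⟩ := by
          rintro ⟨_, ⟨c, rfl⟩ | ⟨c, rfl⟩⟩
          · exact ri c
          · exact (rj c).trans ((rj b).symm.trans (hij'.trans (ri a)))
        exact fun x y => (key x).trans (key y).symm
  join_full := by
    intro V _ G hG D₁ D₂ hd h₁ h₂ _ _ hcard hlt
    obtain ⟨v, hv⟩ := h₁.nonempty
    obtain ⟨u, hu⟩ := h₂.nonempty
    exact ⟨v, hv, u, hu, StarBad.join hG hd h₁.closed h₂.closed (by omega) hv hu⟩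

end Star

section Patterns

variable {V W : Type}

/-- A configuration of vertices with prescribed adjacencies, non-equalities and degree bounds. -/
structure Pat where
  k : ℕ
  adj : Fin (k + 1) → Fin (k + 1) → Prop
  ne : Fin (k + 1) → Fin (k + 1) → Prop
  dem : Fin (k + 1) → ℕ
  conn : ∀ i, i = 0 ∨ ∃ j < i, adj j i

/-- The pattern `P` occurs in `G`. -/
def Pat.Matches (P : Pat) (G : SimpleGraph V) : Prop :=
  ∃ f : Fin (P.k + 1) → V, (∀ i j, P.adj i j → G.Adj (f i) (f j)) ∧
    (∀ i j, P.ne i j → f i ≠ f j) ∧ ∀ i, P.dem i ≤ dg G (f i)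

/-- The pattern given by a list of adjacencies and a list of non-equalities. -/
def Pat.ofLists (k : ℕ) (A N : List (Fin (k + 1) × Fin (k + 1))) (dem : Fin (k + 1) → ℕ)
    (conn : ∀ i, i = 0 ∨ ∃ j < i, (j, i) ∈ A) : Pat where
  k := k
  adj i j := (i, j) ∈ A
  ne i j := (i, j) ∈ N
  dem := dem
  conn := conn

theorem Pat.ofLists_matches {k : ℕ} {A N : List (Fin (k + 1) × Fin (k + 1))}
    {dem : Fin (k + 1) → ℕ} {conn} {G : SimpleGraph V} :
    (Pat.ofLists k A N dem conn).Matches G ↔ ∃ f : Fin (k + 1) → V,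
      (∀ p ∈ A, G.Adj (f p.1) (f p.2)) ∧ (∀ p ∈ N, f p.1 ≠ f p.2) ∧ ∀ i, dem i ≤ dg G (f i) :=
  ⟨fun ⟨f, h1, h2, h3⟩ => ⟨f, fun p hp => h1 p.1 p.2 hp, fun p hp => h2 p.1 p.2 hp, h3⟩,
    fun ⟨f, h1, h2, h3⟩ => ⟨f, fun i j h => h1 (i, j) h, fun i j h => h2 (i, j) h, h3⟩⟩

/-- The number of vertices needed to witness `P`. -/
def Pat.size (P : Pat) : ℕ := ∑ i, (P.dem i + 1)

theorem Pat.Matches.mono [Finite V] {P : Pat} {G : SimpleGraph V} {H : SimpleGraph W}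
    (h : Contains G H) (hP : P.Matches H) : P.Matches G := by
  obtain ⟨φ, hφ⟩ := h
  obtain ⟨f, h1, h2, h3⟩ := hP
  exact ⟨φ ∘ f, fun i j hp => hφ _ _ (h1 i j hp), fun i j hp he => h2 i j hp (φ.injective he),
    fun i => (h3 i).trans (dg_le_of_embedding φ hφ _)⟩

theorem Pat.Matches.exists_local [Finite V] {P : Pat} {G : SimpleGraph V} (hP : P.Matches G) :
    ∃ S : Set V, S.ncard ≤ P.size ∧ (∃ a, ∀ x, (G.induce S).Reachable a x) ∧
      P.Matches (G.induce S) := by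
  obtain ⟨f, h1, h2, h3⟩ := hP
  choose N hN hcard using fun i => Set.exists_subset_card_eq (h3 i)
  set S : Set V := ⋃ i, insert (f i) (N i) with hS
  have hf : ∀ i, f i ∈ S := fun i => Set.mem_iUnion.2 ⟨i, .inl rfl⟩
  have hNS : ∀ i, N i ⊆ S := fun i x hx => Set.mem_iUnion.2 ⟨i, .inr hx⟩
  refine ⟨S, ?_, ⟨⟨f 0, hf 0⟩, ?_⟩, fun i => ⟨f i, hf i⟩, fun i j hp => h1 i j hp,
    fun i j hp he => h2 i j hp (congrArg Subtype.val he), fun i => ?_⟩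
  · refine (Set.ncard_iUnion_le_of_fintype _).trans (Finset.sum_le_sum fun i _ => ?_)
    rw [← hcard i]
    exact Set.ncard_insert_le _ _
  · have key : ∀ n, ∀ i : Fin (P.k + 1), i.1 = n → (G.induce S).Reachable ⟨f 0, hf 0⟩ ⟨f i, hf i⟩ := by
      intro n
      induction n using Nat.strong_induction_on with
      | _ n ih =>
        rintro i rfl
        rcases P.conn i with rfl | ⟨j, hj, hmem⟩
        · rfl
        · exact (ih j.1 hj j rfl).trans (Adj.reachable (G := G.induce S) (h1 _ _ hmem))
    rintro ⟨x, hx⟩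
    obtain ⟨i, hi⟩ := Set.mem_iUnion.1 hx
    rcases hi with rfl | hi
    · exact key _ i rfl
    · exact (key _ i rfl).trans (Adj.reachable (G := G.induce S) (hN i hi))
  · rw [← hcard i]
    unfold dg
    rw [← Set.ncard_image_of_injective _ (Subtype.val_injective (p := (· ∈ S)))]
    refine Set.ncard_le_ncard (fun x hx => ?_) (Set.toFinite _)
    exact ⟨⟨x, hNS i hx⟩, hN i hx, rfl⟩

/-- Some pattern of the list occurs in `G`. -/
def PatBad (L : List Pat) (G : SimpleGraph V) : Prop := ∃ P ∈ L, P.Matches G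

theorem PatBad.mono [Finite V] {L : List Pat} {G : SimpleGraph V} {H : SimpleGraph W}
    (h : Contains G H) : PatBad L H → PatBad L G :=
  fun ⟨P, hP, hm⟩ => ⟨P, hP, hm.mono h⟩

theorem PatBad.exists_local [Finite V] {L : List Pat} {G : SimpleGraph V} (h : PatBad L G) :
    ∃ S : Set V, S.ncard ≤ (L.map Pat.size).sum ∧ (∃ a, ∀ x, (G.induce S).Reachable a x) ∧
      PatBad L (G.induce S) := by
  obtain ⟨P, hP, hm⟩ := h
  obtain ⟨S, h1, h2, h3⟩ := hm.exists_local
  exact ⟨S, h1.trans (List.single_le_sum (fun _ _ => Nat.zero_le _) _ (List.mem_map_of_mem hP)),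
    h2, P, hP, h3⟩

end Patterns

section Degrees

variable {V : Type} {G : SimpleGraph V} {u v : V}

theorem dg_addE_of_ne {x : V} (hu : x ≠ u) (hv : x ≠ v) : dg (addE G u v) x = dg G x := by
  unfold dg
  congr 1
  ext y
  simp only [SimpleGraph.mem_neighborSet, addE_adj]
  tauto

variable [Finite V]

theorem dg_addE_left (hne : u ≠ v) (h : ¬ G.Adj u v) : dg (addE G u v) u = dg G u + 1 := by
  unfold dg
  rw [← Set.ncard_insert_of_notMem (a := v) (by simpa using h)]
  congr 1
  ext y
  simp only [SimpleGraph.mem_neighborSet, addE_adj, Set.mem_insert_iff]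
  grind

theorem dg_addE_right (hne : u ≠ v) (h : ¬ G.Adj u v) : dg (addE G u v) v = dg G v + 1 := by
  rw [addE_comm]
  exact dg_addE_left hne.symm fun h' => h h'.symm

theorem two_le_dg {x a b : V} (ha : G.Adj x a) (hb : G.Adj x b) (hab : a ≠ b) : 2 ≤ dg G x := by
  rw [← Set.ncard_pair hab]
  exact Set.ncard_le_ncard (by rintro _ (rfl | rfl); exacts [ha, hb]) (Set.toFinite _)

theorem three_le_dg {x a b c : V} (ha : G.Adj x a) (hb : G.Adj x b) (hc : G.Adj x c)
    (hab : a ≠ b) (hac : a ≠ c) (hbc : b ≠ c) : 3 ≤ dg G x := by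
  have h3 : ({a, b, c} : Set V).ncard = 3 := Set.ncard_eq_three.2 ⟨a, b, c, hab, hac, hbc, rfl⟩
  rw [← h3]
  exact Set.ncard_le_ncard (by rintro _ (rfl | rfl | rfl); exacts [ha, hb, hc]) (Set.toFinite _)

theorem eq_of_dg_le_one {x a b : V} (h : dg G x ≤ 1) (ha : G.Adj x a) (hb : G.Adj x b) : a = b := by
  by_contra hab
  have := two_le_dg ha hb hab
  omega

theorem Treeish.exists_dg_le_one {D : Set V} (h : Treeish G D) (hne : D.Nonempty)
    (hcl : Closed G D) : ∃ x ∈ D, dg G x ≤ 1 := by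
  obtain ⟨x, hx, hx'⟩ := h D subset_rfl hne
  refine ⟨x, hx, ?_⟩
  by_contra hlt
  obtain ⟨a, b, ha, hb, hab⟩ := (Set.one_lt_ncard_iff (Set.toFinite _)).1 (not_le.1 hlt)
  exact hab (hx' a (hcl x hx a ha) b (hcl x hx b hb) ha hb)

end Degrees

section ShortCycles

variable {V : Type} {G : SimpleGraph V}

theorem Cyc.of_square {a b c e : V} (hab : G.Adj a b) (hbc : G.Adj b c) (hce : G.Adj c e)
    (hea : G.Adj e a) (hac : a ≠ c) (hbe : b ≠ e) : ∃ f, Cyc G 4 f := by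
  refine ⟨(![a, b, c, e] : Fin 4 → V), ?_, ?_⟩
  · have h1 := hab.ne
    have h2 := hbc.ne
    have h3 := hce.ne
    have h4 := hea.ne
    intro i j
    change Fin 4 at i j
    fin_cases i <;> fin_cases j <;>
      first | exact fun _ => rfl | simp [h1, h2, h3, h4, hac, hbe, h1.symm, h2.symm, h3.symm,
        h4.symm, hac.symm, hbe.symm]
  · intro i
    change Fin 4 at i
    fin_cases i
    exacts [hab, hbc, hce, hea]

theorem Cyc.of_pentagon {a b c d e : V} (hab : G.Adj a b) (hbc : G.Adj b c) (hcd : G.Adj c d)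
    (hde : G.Adj d e) (hea : G.Adj e a) (hac : a ≠ c) (had : a ≠ d) (hbd : b ≠ d) (hbe : b ≠ e)
    (hce : c ≠ e) : ∃ f, Cyc G 5 f := by
  refine ⟨(![a, b, c, d, e] : Fin 5 → V), ?_, ?_⟩
  · have h1 := hab.ne
    have h2 := hbc.ne
    have h3 := hcd.ne
    have h4 := hde.ne
    have h5 := hea.ne
    intro i j
    change Fin 5 at i j
    fin_cases i <;> fin_cases j <;>
      first | exact fun _ => rfl | simp [h1, h2, h3, h4, h5, hac, had, hbd, hbe, hce, h1.symm,
        h2.symm, h3.symm, h4.symm, h5.symm, hac.symm, had.symm, hbd.symm, hbe.symm, hce.symm]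
  · intro i
    change Fin 5 at i
    fin_cases i
    exacts [hab, hbc, hcd, hde, hea]

/-- `G` has no cycles of length `s`. -/
def NoCyc (G : SimpleGraph V) (s : ℕ) : Prop := ∀ f, ¬ Cyc G s f

theorem NoCyc.triangle (h : NoCyc G 3) {a b c : V} (hab : G.Adj a b) (hbc : G.Adj b c)
    (hca : G.Adj c a) : False := by
  obtain ⟨f, hf⟩ := Cyc.of_triangle hab hbc hca
  exact h f hf

theorem NoCyc.square (h : NoCyc G 4) {a b c e : V} (hab : G.Adj a b) (hbc : G.Adj b c)
    (hce : G.Adj c e) (hea : G.Adj e a) (hac : a ≠ c) (hbe : b ≠ e) : False := by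
  obtain ⟨f, hf⟩ := Cyc.of_square hab hbc hce hea hac hbe
  exact h f hf

theorem NoCyc.pentagon (h : NoCyc G 5) {a b c d e : V} (hab : G.Adj a b) (hbc : G.Adj b c)
    (hcd : G.Adj c d) (hde : G.Adj d e) (hea : G.Adj e a) (hac : a ≠ c) (had : a ≠ d)
    (hbd : b ≠ d) (hbe : b ≠ e) (hce : c ≠ e) : False := by
  obtain ⟨f, hf⟩ := Cyc.of_pentagon hab hbc hcd hde hea hac had hbd hbe hce
  exact h f hf

theorem NoCyc.addE {s : ℕ} (hs : 3 ≤ s) (h : NoCyc G s) {D : Set V} (hD : Closed G D) {u v : V}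
    (hu : u ∈ D) (hv : v ∉ D) : NoCyc (addE G u v) s :=
  fun f hf => h f (hf.of_addE hs hD hu hv)

theorem NoCyc.of_treeish {s : ℕ} (hs : 3 ≤ s) (h : Treeish G Set.univ) : NoCyc G s :=
  fun _ hf => hf.not_treeish hs h (Set.subset_univ _)

/-- The pattern of a cycle of length `s + 3`. -/
def cycPat (s : ℕ) : Pat where
  k := s + 2
  adj i j := j = i + 1
  ne i j := i ≠ j
  dem _ := 0
  conn i := by
    rcases Fin.eq_zero_or_eq_succ i with h | ⟨j, rfl⟩
    · exact .inl h
    · exact .inr ⟨j.castSucc, Fin.castSucc_lt_succ, Fin.coeSucc_eq_succ.symm⟩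

theorem cycPat_matches {s : ℕ} : (cycPat s).Matches G ↔ ∃ f, Cyc G (s + 3) f := by
  constructor
  · rintro ⟨f, h1, h2, -⟩
    exact ⟨f, fun i j hij => by_contra fun hne => h2 i j hne hij, fun i => h1 i _ rfl⟩
  · rintro ⟨f, hf⟩
    refine ⟨f, ?_, fun i j hne he => hne (hf.1 he), fun i => Nat.zero_le _⟩
    rintro i _ rfl
    exact hf.2 i

theorem noCyc_iff {s : ℕ} : NoCyc G (s + 3) ↔ ¬ (cycPat s).Matches G := by
  rw [cycPat_matches]
  simp [NoCyc]

end ShortCycles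

section DoubleStar

variable {V : Type}

/-- The forbidden patterns for double stars with centres of degree `d`. -/
def ddPats (d : ℕ) : List Pat :=
  [cycPat 0, cycPat 1,
    .ofLists 1 [(0, 1)] [] ![d, d + 1] (by decide),
    .ofLists 2 [(0, 1), (1, 2)] [(0, 2)] ![d, d, d] (by decide),
    .ofLists 4 [(0, 1), (1, 2), (2, 3), (3, 4)] [(1, 3)] ![d, d, 0, d, d] (by decide),
    .ofLists 5 [(0, 1), (1, 2), (2, 3), (3, 4), (4, 5)] [(1, 3), (2, 4)] ![d, d, 0, 0, d, d]
      (by decide)]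

/-- An edge whose ends both have degree at least `d`. -/
structure DDEdge (d : ℕ) (G : SimpleGraph V) (y z : V) : Prop where
  adj : G.Adj y z
  left : d ≤ dg G y
  right : d ≤ dg G z

theorem DDEdge.symm {d : ℕ} {G : SimpleGraph V} {y z : V} (h : DDEdge d G y z) :
    DDEdge d G z y := ⟨h.adj.symm, h.right, h.left⟩

/-- The absence of all patterns in `ddPats d`. -/
structure DDNice (d : ℕ) (G : SimpleGraph V) : Prop where
  c3 : NoCyc G 3
  c4 : NoCyc G 4
  dg_le : ∀ {y z}, DDEdge d G y z → dg G z ≤ d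
  path : ∀ {y z t}, DDEdge d G y z → DDEdge d G z t → y = t
  dist_two : ∀ {y z w z' y'}, DDEdge d G y z → G.Adj z w → G.Adj w z' → DDEdge d G z' y' → z = z'
  dist_three : ∀ {y z w w' z' y'}, DDEdge d G y z → G.Adj z w → G.Adj w w' → G.Adj w' z' →
    DDEdge d G z' y' → z ≠ w' → w = z'

theorem ddNice_iff {d : ℕ} {G : SimpleGraph V} : ¬ PatBad (ddPats d) G ↔ DDNice d G := by
  constructor
  · intro h
    have h' : ∀ P ∈ ddPats d, ¬ P.Matches G := fun P hP hm => h ⟨P, hP, hm⟩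
    have h1 := h' _ (.head _)
    have h2 := h' _ (.tail _ (.head _))
    have h3 := h' _ (.tail _ (.tail _ (.head _)))
    have h4 := h' _ (.tail _ (.tail _ (.tail _ (.head _))))
    have h5 := h' _ (.tail _ (.tail _ (.tail _ (.tail _ (.head _)))))
    have h6 := h' _ (.tail _ (.tail _ (.tail _ (.tail _ (.tail _ (.head _))))))
    refine ⟨noCyc_iff.2 h1, noCyc_iff.2 h2, ?_, ?_, ?_, ?_⟩
    · intro y z hyz
      by_contra hlt
      refine h3 (Pat.ofLists_matches.2 ⟨![y, z], by simp [hyz.adj], by simp, ?_⟩)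
      simpa [Fin.forall_fin_succ, hyz.left] using hlt
    · intro y z t hyz hzt
      by_contra hne
      exact h4 (Pat.ofLists_matches.2 ⟨![y, z, t], by simp [hyz.adj, hzt.adj], by simpa using hne,
        by simp [Fin.forall_fin_succ, hyz.left, hzt.left, hzt.right]⟩)
    · intro y z w z' y' e1 e2 e3 e4
      by_contra hne
      exact h5 (Pat.ofLists_matches.2 ⟨![y, z, w, z', y'], by simp [e1.adj, e2, e3, e4.adj],
        by simpa using hne, by simp [Fin.forall_fin_succ, e1.left, e1.right, e4.left, e4.right]⟩)
    · intro y z w w' z' y' e1 e2 e3 e4 e5 hne'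
      by_contra hne
      exact h6 (Pat.ofLists_matches.2 ⟨![y, z, w, w', z', y'],
        by simp [e1.adj, e2, e3, e4, e5.adj], by simp [hne, hne'],
        by simp [Fin.forall_fin_succ, e1.left, e1.right, e5.left, e5.right]⟩)
  · rintro h ⟨P, hP, hm⟩
    simp only [ddPats, List.mem_cons, List.not_mem_nil, or_false] at hP
    rcases hP with rfl | rfl | rfl | rfl | rfl | rfl
    · exact noCyc_iff.1 h.c3 hm
    · exact noCyc_iff.1 h.c4 hm
    · obtain ⟨f, ha, -, hd⟩ := Pat.ofLists_matches.1 hm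
      have h0 := hd 0
      have h1 := hd 1
      simp at h0 h1
      have := h.dg_le ⟨ha (0, 1) (by simp), h0, by simp; omega⟩
      simp at this
      omega
    · obtain ⟨f, ha, hn, hd⟩ := Pat.ofLists_matches.1 hm
      exact hn (0, 2) (by simp) (h.path ⟨ha (0, 1) (by simp), hd 0, hd 1⟩
        ⟨ha (1, 2) (by simp), hd 1, hd 2⟩)
    · obtain ⟨f, ha, hn, hd⟩ := Pat.ofLists_matches.1 hm
      exact hn (1, 3) (by simp) (h.dist_two ⟨ha (0, 1) (by simp), hd 0, hd 1⟩
        (ha (1, 2) (by simp)) (ha (2, 3) (by simp)) ⟨ha (3, 4) (by simp), hd 3, hd 4⟩)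
    · obtain ⟨f, ha, hn, hd⟩ := Pat.ofLists_matches.1 hm
      exact hn (2, 4) (by simp) (h.dist_three ⟨ha (0, 1) (by simp), hd 0, hd 1⟩
        (ha (1, 2) (by simp)) (ha (2, 3) (by simp)) (ha (3, 4) (by simp))
        ⟨ha (4, 5) (by simp), hd 4, hd 5⟩ (hn (1, 3) (by simp)))

/-- A vertex to which a pendant tree can be attached. -/
structure DDGood (d : ℕ) (G : SimpleGraph V) (v : V) : Prop where
  not_almost : dg G v + 1 = d → ∀ x, G.Adj v x → dg G x < d
  not_end : ∀ y, ¬ DDEdge d G v y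
  not_near : ∀ y z, G.Adj v y → ¬ DDEdge d G y z

theorem DDNice.addE [Finite V] {d : ℕ} (hd : 3 ≤ d) {G : SimpleGraph V} (h : DDNice d G)
    {D : Set V} (hD : Closed G D) {u v : V} (hv : v ∈ D) (hu : u ∉ D) (hgood : DDGood d G v)
    (hleaf : dg G u ≤ 1) : DDNice d (addE G v u) := by
  have hne : v ≠ u := by
    rintro rfl
    exact hu hv
  have hadj : ¬ G.Adj v u := fun ha => hu (hD _ hv _ ha)
  have hdu := dg_addE_right hne hadj
  have hdv := dg_addE_left hne hadj
  have hdx : ∀ {x}, x ≠ v → x ≠ u → dg (_root_.addE G v u) x = dg G x := dg_addE_of_ne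
  have hback : ∀ {x y}, (_root_.addE G v u).Adj x y → x ≠ v → x ≠ u → G.Adj x y := by
    intro x y hxy h1 h2
    rcases addE_adj.1 hxy with h3 | ⟨-, ⟨h3, -⟩ | ⟨h3, -⟩⟩
    · exact h3
    · exact absurd h3 h1
    · exact absurd h3 h2
  have hedge : ∀ {y z}, DDEdge d (_root_.addE G v u) y z → y ≠ v ∧ y ≠ u ∧ DDEdge d G y z := by
    intro y z hyz
    have hyu : y ≠ u := by
      rintro rfl
      have := hyz.left
      omega
    have hzu : z ≠ u := by
      rintro rfl
      have := hyz.right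
      omega
    have key : ∀ {z}, z ≠ u → ¬ DDEdge d (_root_.addE G v u) v z := by
      intro z hzu hvz
      have hzv : z ≠ v := hvz.adj.ne'
      have hz := hvz.right
      rw [hdx hzv hzu] at hz
      have ha : G.Adj v z := (hback hvz.adj.symm hzv hzu).symm
      have hl := hvz.left
      rw [hdv] at hl
      by_cases h1 : dg G v + 1 = d
      · have := hgood.not_almost h1 z ha
        omega
      · exact hgood.not_end z ⟨ha, by omega, hz⟩
    have hyv : y ≠ v := by
      rintro rfl
      exact key hzu hyz
    have hzv : z ≠ v := by
      rintro rfl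
      exact key hyu hyz.symm
    have h1 := hyz.left
    have h2 := hyz.right
    rw [hdx hyv hyu] at h1
    rw [hdx hzv hzu] at h2
    exact ⟨hyv, hyu, hback hyz.adj hyv hyu, h1, h2⟩
  refine ⟨h.c3.addE (by norm_num) hD hv hu, h.c4.addE (by norm_num) hD hv hu, ?_, ?_, ?_, ?_⟩
  · intro y z hyz
    obtain ⟨h1, h2, -⟩ := hedge hyz.symm
    rw [hdx h1 h2]
    exact h.dg_le (hedge hyz).2.2
  · intro y z t h1 h2
    exact h.path (hedge h1).2.2 (hedge h2).2.2
  · intro y z w z' y' h1 h2 h3 h4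
    obtain ⟨a1, a2, a3⟩ := hedge h1.symm
    obtain ⟨b1, b2, b3⟩ := hedge h4
    exact h.dist_two a3.symm (hback h2 a1 a2) (hback h3.symm b1 b2).symm b3
  · intro y z w w' z' y' h1 h2 h3 h4 h5 hne
    obtain ⟨a1, a2, a3⟩ := hedge h1.symm
    obtain ⟨b1, b2, b3⟩ := hedge h5
    have h2' := hback h2 a1 a2
    have h4' := (hback h4.symm b1 b2).symm
    rcases addE_adj.1 h3 with h3' | ⟨-, ⟨rfl, rfl⟩ | ⟨rfl, rfl⟩⟩
    · exact h.dist_three a3.symm h2' h3' h4' b3 hne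
    · exact absurd a3 (hgood.not_near z y h2'.symm)
    · exact absurd b3 (hgood.not_near z' y' h4')

theorem DDNice.exists_good [Finite V] {d : ℕ} {G : SimpleGraph V} (h : DDNice d G)
    {D : Set V} (hD : IsComp G D) (hcard : D.ncard ≠ 2 * d) : ∃ v ∈ D, DDGood d G v := by
  by_cases hdd : ∃ y ∈ D, ∃ z, DDEdge d G y z
  · by_cases hfar : ∃ y ∈ D, ∃ z w w', DDEdge d G y z ∧ G.Adj y w ∧ w ≠ z ∧ G.Adj w w' ∧ w' ≠ y
    · obtain ⟨y, hy, z, w, w', hyz, hyw, hwz, hww', hw'y⟩ := hfar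
      have hw' : w' ∈ D := hD.closed _ (hD.closed _ hy _ hyw) _ hww'
      have hend : ∀ t, ¬ DDEdge d G w' t := fun t ht =>
        hw'y (h.dist_two hyz.symm hyw hww' ht).symm
      have hnear : ∀ t t', G.Adj w' t → ¬ DDEdge d G t t' := by
        intro t t' h1 h2
        have := h.dist_three hyz.symm hyw hww' h1 h2 hw'y.symm
        subst this
        exact hwz (h.path hyz.symm ⟨hyw, hyz.left, h2.left⟩).symm
      by_cases hx : dg G w' + 1 = d → ∀ x, G.Adj w' x → dg G x < d
      · exact ⟨w', hw', hx, hend, hnear⟩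
      · push Not at hx
        obtain ⟨-, x, hwx, hx⟩ := hx
        refine ⟨x, hD.closed _ hw' _ hwx, fun he => by omega, fun t => hnear x t hwx, ?_⟩
        intro t t' h1 h2
        exact hnear x t hwx ⟨h1, hx, h2.left⟩
    · push Not at hfar
      exfalso
      obtain ⟨y, hy, z, hyz⟩ := hdd
      have hz : z ∈ D := hD.closed _ hy _ hyz.adj
      apply hcard
      have hDeq : G.neighborSet y ∪ G.neighborSet z = D := by
        apply hD.minimal
        · rintro x (hx | hx)
          · exact hD.closed _ hy _ hx
          · exact hD.closed _ hz _ hx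
        · exact ⟨z, .inl hyz.adj⟩
        · rintro x (hx | hx) t hxt
          · by_cases hxz : x = z
            · subst hxz
              exact .inr hxt
            · have := hfar y hy z x t hyz hx hxz hxt
              subst this
              exact .inr hyz.adj.symm
          · by_cases hxy : x = y
            · subst hxy
              exact .inl hxt
            · have := hfar z hz y x t hyz.symm hx hxy hxt
              subst this
              exact .inl hyz.adj
      have hdisj : Disjoint (G.neighborSet y) (G.neighborSet z) := by
        rw [Set.disjoint_left]
        intro x h1 h2
        exact h.c3.triangle hyz.adj h2 (show G.Adj y x from h1).symm
      rw [← hDeq, Set.ncard_union_eq hdisj]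
      have h1 := h.dg_le hyz
      have h2 := h.dg_le hyz.symm
      have h3 := hyz.left
      have h4 := hyz.right
      unfold dg at *
      omega
  · push Not at hdd
    have h2 : ∀ v ∈ D, ∀ y z, G.Adj v y → ¬ DDEdge d G y z :=
      fun v hv y z hvy => hdd y (hD.closed _ hv _ hvy) z
    by_cases hx : ∃ v ∈ D, dg G v + 1 ≠ d
    · obtain ⟨v, hv, hne⟩ := hx
      exact ⟨v, hv, fun he => absurd he hne, hdd v hv, h2 v hv⟩
    · push Not at hx
      obtain ⟨v, hv⟩ := hD.nonempty
      refine ⟨v, hv, fun _ x hvx => ?_, hdd v hv, h2 v hv⟩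
      have := hx x (hD.closed _ hv _ hvx)
      omega

theorem ddPats_join [Finite V] {d : ℕ} (hd : 3 ≤ d) {G : SimpleGraph V}
    (h : ¬ PatBad (ddPats d) G) {D₁ D₂ : Set V} (hdis : Disjoint D₁ D₂) (h₁ : IsComp G D₁)
    (h₂ : IsComp G D₂) (ht : Treeish G D₂) (hcard : D₁.ncard ≠ 2 * d) :
    ∃ v ∈ D₁, ∃ u ∈ D₂, ¬ PatBad (ddPats d) (addE G v u) := by
  rw [ddNice_iff] at h
  obtain ⟨v, hv, hgood⟩ := h.exists_good h₁ hcard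
  obtain ⟨u, hu, hleaf⟩ := ht.exists_dg_le_one h₂.nonempty h₂.closed
  exact ⟨v, hv, u, hu, ddNice_iff.2
    (h.addE hd h₁.closed hv (Set.disjoint_right.1 hdis hu) hgood hleaf)⟩

/-- The parent map of a double star. -/
def ddPar (e : ℕ) : Bool × Option (Fin e) → Bool × Option (Fin e)
  | (β, some _) => (β, none)
  | (_, none) => (false, none)

theorem ddPar_adj_core {e : ℕ} {β : Bool} {y} : (funG (ddPar e)).Adj (β, none) y ↔
    y = (!β, none) ∨ ∃ k, y = (β, some k) := by
  obtain ⟨γ, _ | k⟩ := y <;> cases β <;> cases γ <;> simp [funG, ddPar]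

theorem ddPar_adj_leaf {e : ℕ} {β : Bool} {k : Fin e} {y} : (funG (ddPar e)).Adj (β, some k) y ↔
    y = (β, none) := by
  obtain ⟨γ, _ | k⟩ := y <;> cases β <;> cases γ <;> simp [funG, ddPar]

theorem dg_funG_copies {τ : Type} {m : ℕ} {par : τ → τ} (i : Fin m) (a : τ) :
    dg (funG (copies m par)) (i, a) = dg (funG par) a := by
  have : (funG (copies m par)).neighborSet (i, a) =
      (fun b => (i, b)) '' (funG par).neighborSet a := by
    ext ⟨j, b⟩
    simp only [SimpleGraph.mem_neighborSet, funG_copies_adj, Set.mem_image, Prod.mk.injEq]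
    grind
  unfold dg
  rw [this, Set.ncard_image_of_injective _ (Prod.mk_right_injective i)]

theorem dg_ddPar_core {e : ℕ} (β : Bool) : dg (funG (ddPar e)) (β, none) = e + 1 := by
  have : (funG (ddPar e)).neighborSet (β, none) =
      insert (!β, none) ((fun k => (β, some k)) '' Set.univ) := by
    ext y
    simp only [SimpleGraph.mem_neighborSet, ddPar_adj_core, Set.mem_insert_iff, Set.image_univ,
      Set.mem_range, eq_comm]
  unfold dg
  rw [this, Set.ncard_insert_of_notMem (by simp), Set.ncard_image_of_injective, Set.ncard_univ,
    Nat.card_fin]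
  intro k l h
  simpa using h

theorem dg_ddPar_leaf {e : ℕ} (β : Bool) (k : Fin e) : dg (funG (ddPar e)) (β, some k) = 1 := by
  have : (funG (ddPar e)).neighborSet (β, some k) = {(β, none)} := by
    ext y
    simp only [SimpleGraph.mem_neighborSet, ddPar_adj_leaf, Set.mem_singleton_iff]
  unfold dg
  rw [this, Set.ncard_singleton]

/-- The distance to the root of a double star. -/
def ddRank (e : ℕ) : Bool × Option (Fin e) → ℕ
  | (_, some _) => 2
  | (true, none) => 1
  | (false, none) => 0

theorem ddRank_lt {e : ℕ} (a : Bool × Option (Fin e)) (h : ddPar e a ≠ a) :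
    ddRank e (ddPar e a) < ddRank e a := by
  obtain ⟨_ | _, _ | k⟩ := a <;> simp_all [ddPar, ddRank]

theorem ddNice_model {e : ℕ} (he : 1 ≤ e) (m : ℕ) :
    DDNice (e + 1) (funG (copies m (ddPar e))) := by
  have hnot : ∀ {β γ : Bool}, β ≠ γ → β = !γ := by decide
  set G := funG (copies m (ddPar e)) with hG
  have htree : Treeish G Set.univ := by
    refine treeish_funG (fun x => ddRank e x.2) ?_
    rintro ⟨i, a⟩ - hx
    exact ddRank_lt a (fun h => hx (by simp [copies, h]))
  have hcore : ∀ x, e + 1 ≤ dg G x → ∃ i β, x = (i, β, none) := by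
    rintro ⟨i, β, _ | k⟩ h
    · exact ⟨i, β, rfl⟩
    · rw [dg_funG_copies, dg_ddPar_leaf] at h
      omega
  have hcores : ∀ {i j β γ}, G.Adj (i, β, none) (j, γ, none) ↔ i = j ∧ γ = !β := by
    intro i j β γ
    rw [funG_copies_adj, ddPar_adj_core]
    simp
  have h3 : NoCyc G 3 := NoCyc.of_treeish (by norm_num) htree
  have h4 : NoCyc G 4 := NoCyc.of_treeish (by norm_num) htree
  have hfst : ∀ {x y}, G.Adj x y → x.1 = y.1 := fun h => (funG_copies_adj.1 h).1
  refine ⟨h3, h4, ?_, ?_, ?_, ?_⟩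
  · intro y z hyz
    obtain ⟨i, β, rfl⟩ := hcore z hyz.right
    rw [dg_funG_copies, dg_ddPar_core]
  · intro y z t h1 h2
    obtain ⟨i, β, rfl⟩ := hcore y h1.left
    obtain ⟨j, γ, rfl⟩ := hcore z h1.right
    obtain ⟨k, δ, rfl⟩ := hcore t h2.right
    have h1' := hcores.1 h1.adj
    have h2' := hcores.1 h2.adj
    obtain ⟨rfl, rfl⟩ := h1'
    obtain ⟨rfl, rfl⟩ := h2'
    simp
  · intro y z w z' y' h1 h2 h3' h4'
    obtain ⟨i, β, rfl⟩ := hcore z h1.right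
    obtain ⟨j, γ, rfl⟩ := hcore z' h4'.left
    have hij : i = j := (hfst h2).trans (hfst h3')
    subst hij
    by_contra hne
    have : G.Adj (i, γ, none) (i, β, none) := hcores.2 ⟨rfl, hnot fun he => hne (by rw [he])⟩
    exact h3.triangle h2 h3' this
  · intro y z w w' z' y' h1 h2 h3' h4' h5 hne
    obtain ⟨i, β, rfl⟩ := hcore z h1.right
    obtain ⟨j, γ, rfl⟩ := hcore z' h5.left
    have hij : i = j := (hfst h2).trans ((hfst h3').trans (hfst h4'))
    subst hij
    by_cases hβ : β = γ
    · subst hβ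
      exact (h3.triangle h2 h3' h4').elim
    · have : G.Adj (i, γ, none) (i, β, none) := hcores.2 ⟨rfl, hnot hβ⟩
      by_contra hne'
      exact h4.square h2 h3' h4' this hne hne'

theorem ddPats_bad_add {e m : ℕ} (x y : Fin m × Bool × Option (Fin e)) (hne : x ≠ y)
    (hadj : ¬ (funG (copies m (ddPar e))).Adj x y) :
    PatBad (ddPats (e + 1)) (addE (funG (copies m (ddPar e))) x y) := by
  by_contra hbad
  rw [ddNice_iff] at hbad
  set G := funG (copies m (ddPar e)) with hG
  have hle := le_addE G x y
  have hdg : ∀ z, dg G z ≤ dg (addE G x y) z :=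
    dg_le_of_embedding (Function.Embedding.refl _) (fun _ _ h => hle h)
  have hcore : ∀ i β, e + 1 ≤ dg (addE G x y) (i, β, none) := fun i β => by
    refine le_trans ?_ (hdg _)
    rw [dg_funG_copies, dg_ddPar_core]
  have hcores : ∀ i β, G.Adj (i, β, none) (i, !β, none) := fun i β =>
    funG_copies_adj.2 ⟨rfl, ddPar_adj_core.2 (.inl rfl)⟩
  have hleaf : ∀ i β k, G.Adj (i, β, none) (i, β, some k) := fun i β k =>
    funG_copies_adj.2 ⟨rfl, ddPar_adj_core.2 (.inr ⟨k, rfl⟩)⟩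
  have hedge : ∀ i β, DDEdge (e + 1) (addE G x y) (i, !β, none) (i, β, none) := fun i β =>
    ⟨hle (hcores i β).symm, hcore i _, hcore i _⟩
  have hxy : (addE G x y).Adj x y := addE_adj.2 (.inr ⟨hne, .inl ⟨rfl, rfl⟩⟩)
  obtain ⟨i, β, _ | k⟩ := x
  · have h1 := hbad.dg_le (hedge i β)
    rw [dg_addE_left hne hadj, dg_funG_copies, dg_ddPar_core] at h1
    omega
  obtain ⟨j, γ, _ | l⟩ := y
  · have h1 := hbad.dg_le (hedge j γ)
    rw [dg_addE_right hne hadj, dg_funG_copies, dg_ddPar_core] at h1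
    omega
  have hx := hle (hleaf i β k)
  have hy := hle (hleaf j γ l)
  by_cases hij : i = j
  · subst hij
    by_cases hβ : β = γ
    · subst hβ
      exact hbad.c3.triangle hx hxy hy.symm
    · have hγ : γ = !β := (by decide : ∀ β γ : Bool, β ≠ γ → γ = !β) β γ hβ
      subst hγ
      exact hbad.c4.square hx hxy hy.symm (hle (hcores i β).symm) (by simp) (by simp)
  · have := hbad.dist_three (hedge i β) hx hxy hy.symm (hedge j γ).symm (by simp)
    simp at this

/-- The gadget whose tree is a double star with centres of degree `e + 1`. -/
noncomputable def ddGadget (e : ℕ) (he : 2 ≤ e) : Gadget (2 * (e + 1)) where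
  Bad := PatBad (ddPats (e + 1))
  size := ((ddPats (e + 1)).map Pat.size).sum
  bad_mono := PatBad.mono
  bad_local := PatBad.exists_local
  τ := Bool × Option (Fin e)
  fin := inferInstance
  card_τ := by simp
  par := ddPar e
  root := (false, none)
  par_root := rfl
  rank := ddRank e
  rank_lt := ddRank_lt
  not_bad m := ddNice_iff.2 (ddNice_model (by omega) m)
  bad_add _ := ddPats_bad_add
  join_full h _ _ hd h₁ h₂ _ ht _ hlt := ddPats_join (by omega) h hd h₁ h₂ ht hlt.ne

theorem ddGadget_std (e : ℕ) (he : 2 ≤ e) : (ddGadget e he).Std :=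
  fun h _ _ hd h₁ h₂ ht hcard => ddPats_join (by omega) h hd h₁ h₂ ht hcard

end DoubleStar

section Spider

variable {V : Type}

/-- The forbidden patterns for two stars with centres of degree `d` and a path of length two,
all attached to a common vertex. -/
def spPats (d : ℕ) : List Pat :=
  [cycPat 0, cycPat 1, cycPat 2,
    .ofLists 4 [(0, 1), (1, 2), (2, 3), (3, 4)] [(0, 2), (1, 3), (2, 4)] ![d, d, d, d, d]
      (by decide),
    .ofLists 3 [(0, 1), (0, 2), (0, 3)] [(1, 2), (1, 3), (2, 3)] ![4, d, d, 2] (by decide),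
    .ofLists 3 [(0, 1), (0, 2), (0, 3)] [(1, 2), (1, 3), (2, 3)] ![0, d + 1, d, 2] (by decide),
    .ofLists 3 [(0, 1), (0, 2), (0, 3)] [(1, 2), (1, 3), (2, 3)] ![0, d, d, 3] (by decide),
    .ofLists 4 [(0, 1), (0, 2), (0, 3), (3, 4)] [(1, 2), (1, 3), (2, 3), (0, 4)] ![0, d, d, 2, 2]
      (by decide),
    .ofLists 4 [(0, 1), (0, 2), (0, 3), (1, 4)] [(1, 2), (1, 3), (2, 3), (0, 4)] ![0, d, d, 2, 3]
      (by decide),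
    .ofLists 8 [(0, 1), (0, 2), (0, 3), (1, 4), (4, 5), (5, 6), (6, 7), (6, 8)]
      [(1, 2), (1, 3), (2, 3), (5, 7), (5, 8), (7, 8), (1, 5), (0, 4), (4, 6)]
      ![0, d, d, 2, 0, d, 0, d, 2] (by decide),
    .ofLists 9 [(0, 1), (0, 2), (0, 3), (1, 4), (4, 5), (5, 6), (6, 7), (7, 8), (7, 9)]
      [(1, 2), (1, 3), (2, 3), (6, 8), (6, 9), (8, 9), (0, 4), (5, 7)]
      ![0, d, d, 2, 0, 0, d, 0, d, 2] (by decide)]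

/-- A vertex `c` with two neighbours of degree at least `d` and a third one of degree at
least two. -/
structure Ctr (d : ℕ) (G : SimpleGraph V) (c s s' u : V) : Prop where
  adj₁ : G.Adj c s
  adj₂ : G.Adj c s'
  adj₃ : G.Adj c u
  ne₁ : s ≠ s'
  ne₂ : s ≠ u
  ne₃ : s' ≠ u
  dg₁ : d ≤ dg G s
  dg₂ : d ≤ dg G s'
  dg₃ : 2 ≤ dg G u

theorem Ctr.symm {d : ℕ} {G : SimpleGraph V} {c s s' u : V} (h : Ctr d G c s s' u) :
    Ctr d G c s' s u :=
  ⟨h.adj₂, h.adj₁, h.adj₃, h.ne₁.symm, h.ne₃, h.ne₂, h.dg₂, h.dg₁, h.dg₃⟩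

/-- The absence of all patterns in `spPats d`. -/
structure SpNice (d : ℕ) (G : SimpleGraph V) : Prop where
  c3 : NoCyc G 3
  c4 : NoCyc G 4
  c5 : NoCyc G 5
  path : ∀ {a b c e f}, G.Adj a b → G.Adj b c → G.Adj c e → G.Adj e f → a ≠ c → b ≠ e → c ≠ f →
    d ≤ dg G a → d ≤ dg G b → d ≤ dg G c → d ≤ dg G e → dg G f < d
  dg_center : ∀ {c s s' u}, Ctr d G c s s' u → dg G c < 4
  dg_star : ∀ {c s s' u}, Ctr d G c s s' u → dg G s < d + 1
  dg_mid : ∀ {c s s' u}, Ctr d G c s s' u → dg G u < 3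
  dg_end : ∀ {c s s' u u'}, Ctr d G c s s' u → G.Adj u u' → c ≠ u' → dg G u' < 2
  dg_leaf : ∀ {c s s' u w}, Ctr d G c s s' u → G.Adj s w → c ≠ w → dg G w < 3
  dist_two : ∀ {c s s' u w c₂ s₂ s₂' u₂}, Ctr d G c s s' u → Ctr d G c₂ s₂ s₂' u₂ → G.Adj s w →
    G.Adj w s₂ → s ≠ s₂ → c ≠ w → w = c₂
  dist_three : ∀ {c s s' u w w₂ c₂ s₂ s₂' u₂}, Ctr d G c s s' u → Ctr d G c₂ s₂ s₂' u₂ →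
    G.Adj s w → G.Adj w w₂ → G.Adj w₂ s₂ → c ≠ w → w₂ = c₂

theorem spNice_iff {d : ℕ} {G : SimpleGraph V} : ¬ PatBad (spPats d) G ↔ SpNice d G := by
  constructor
  · intro h
    have h' : ∀ P ∈ spPats d, ¬ P.Matches G := fun P hP hm => h ⟨P, hP, hm⟩
    simp only [spPats, List.forall_mem_cons] at h'
    obtain ⟨h1, h2, h3, h4, h5, h6, h7, h8, h9, h10, h11, -⟩ := h'
    refine ⟨noCyc_iff.2 h1, noCyc_iff.2 h2, noCyc_iff.2 h3, ?_, ?_, ?_, ?_, ?_, ?_, ?_, ?_⟩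
    · intro a b c e f e1 e2 e3 e4 n1 n2 n3 d1 d2 d3 d4
      by_contra hlt
      exact h4 (Pat.ofLists_matches.2 ⟨![a, b, c, e, f], by simp [e1, e2, e3, e4],
        by simp [n1, n2, n3], by simp [Fin.forall_fin_succ, d1, d2, d3, d4, not_lt.1 hlt]⟩)
    · intro c s s' u e
      by_contra hlt
      exact h5 (Pat.ofLists_matches.2 ⟨![c, s, s', u], by simp [e.adj₁, e.adj₂, e.adj₃],
        by simp [e.ne₁, e.ne₂, e.ne₃],
        by simp [Fin.forall_fin_succ, e.dg₁, e.dg₂, e.dg₃, not_lt.1 hlt]⟩)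
    · intro c s s' u e
      by_contra hlt
      exact h6 (Pat.ofLists_matches.2 ⟨![c, s, s', u], by simp [e.adj₁, e.adj₂, e.adj₃],
        by simp [e.ne₁, e.ne₂, e.ne₃],
        by simp [Fin.forall_fin_succ, e.dg₂, e.dg₃, not_lt.1 hlt]⟩)
    · intro c s s' u e
      by_contra hlt
      exact h7 (Pat.ofLists_matches.2 ⟨![c, s, s', u], by simp [e.adj₁, e.adj₂, e.adj₃],
        by simp [e.ne₁, e.ne₂, e.ne₃],
        by simp [Fin.forall_fin_succ, e.dg₁, e.dg₂, not_lt.1 hlt]⟩)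
    · intro c s s' u u' e e1 n1
      by_contra hlt
      exact h8 (Pat.ofLists_matches.2 ⟨![c, s, s', u, u'],
        by simp [e.adj₁, e.adj₂, e.adj₃, e1], by simp [e.ne₁, e.ne₂, e.ne₃, n1],
        by simp [Fin.forall_fin_succ, e.dg₁, e.dg₂, e.dg₃, not_lt.1 hlt]⟩)
    · intro c s s' u w e e1 n1
      by_contra hlt
      exact h9 (Pat.ofLists_matches.2 ⟨![c, s, s', u, w],
        by simp [e.adj₁, e.adj₂, e.adj₃, e1], by simp [e.ne₁, e.ne₂, e.ne₃, n1],
        by simp [Fin.forall_fin_succ, e.dg₁, e.dg₂, e.dg₃, not_lt.1 hlt]⟩)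
    · intro c s s' u w c₂ s₂ s₂' u₂ e e₂ e1 e2 n1 n2
      by_contra hlt
      exact h10 (Pat.ofLists_matches.2 ⟨![c, s, s', u, w, s₂, c₂, s₂', u₂],
        by simp [e.adj₁, e.adj₂, e.adj₃, e1, e2, e₂.adj₁.symm, e₂.adj₂, e₂.adj₃],
        by simp [e.ne₁, e.ne₂, e.ne₃, e₂.ne₁, e₂.ne₂, e₂.ne₃, n1, n2, hlt],
        by simp [Fin.forall_fin_succ, e.dg₁, e.dg₂, e.dg₃, e₂.dg₁, e₂.dg₂, e₂.dg₃]⟩)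
    · intro c s s' u w w₂ c₂ s₂ s₂' u₂ e e₂ e1 e2 e3 n1
      by_contra hlt
      exact h11 (Pat.ofLists_matches.2 ⟨![c, s, s', u, w, w₂, s₂, c₂, s₂', u₂],
        by simp [e.adj₁, e.adj₂, e.adj₃, e1, e2, e3, e₂.adj₁.symm, e₂.adj₂, e₂.adj₃],
        by simp [e.ne₁, e.ne₂, e.ne₃, e₂.ne₁, e₂.ne₂, e₂.ne₃, n1, hlt],
        by simp [Fin.forall_fin_succ, e.dg₁, e.dg₂, e.dg₃, e₂.dg₁, e₂.dg₂, e₂.dg₃]⟩)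
  · rintro h ⟨P, hP, hm⟩
    have ctr : ∀ {c s s' u}, (G.Adj c s ∧ G.Adj c s' ∧ G.Adj c u) → (s ≠ s' ∧ s ≠ u ∧ s' ≠ u) →
        (d ≤ dg G s ∧ d ≤ dg G s' ∧ 2 ≤ dg G u) → Ctr d G c s s' u :=
      fun ⟨a, b, c⟩ ⟨e, f, g⟩ ⟨i, j, k⟩ => ⟨a, b, c, e, f, g, i, j, k⟩
    simp only [spPats, List.mem_cons, List.not_mem_nil, or_false] at hP
    rcases hP with rfl | rfl | rfl | rfl | rfl | rfl | rfl | rfl | rfl | rfl | rfl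
    · exact noCyc_iff.1 h.c3 hm
    · exact noCyc_iff.1 h.c4 hm
    · exact noCyc_iff.1 h.c5 hm
    all_goals
      obtain ⟨f, ha, hn, hd⟩ := Pat.ofLists_matches.1 hm
      simp only [List.forall_mem_cons, List.not_mem_nil, false_implies, implies_true,
        and_true] at ha hn
    · obtain ⟨a1, a2, a3, a4⟩ := ha
      obtain ⟨n1, n2, n3⟩ := hn
      exact (h.path a1 a2 a3 a4 n1 n2 n3 (hd 0) (hd 1) (hd 2) (hd 3)).not_ge (hd 4)
    · exact (h.dg_center (ctr ha hn ⟨hd 1, hd 2, hd 3⟩)).not_ge (hd 0)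
    · exact (h.dg_star (ctr ha hn ⟨(Nat.le_succ d).trans (hd 1), hd 2, hd 3⟩)).not_ge (hd 1)
    · exact (h.dg_mid (ctr ha hn ⟨hd 1, hd 2, (Nat.le_succ 2).trans (hd 3)⟩)).not_ge (hd 3)
    · obtain ⟨a1, a2, a3, a4⟩ := ha
      obtain ⟨n1, n2, n3, n4⟩ := hn
      exact (h.dg_end ⟨a1, a2, a3, n1, n2, n3, hd 1, hd 2, hd 3⟩ a4 n4).not_ge (hd 4)
    · obtain ⟨a1, a2, a3, a4⟩ := ha
      obtain ⟨n1, n2, n3, n4⟩ := hn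
      exact (h.dg_leaf ⟨a1, a2, a3, n1, n2, n3, hd 1, hd 2, hd 3⟩ a4 n4).not_ge (hd 4)
    · obtain ⟨a1, a2, a3, a4, a5, a6, a7, a8⟩ := ha
      obtain ⟨n1, n2, n3, n4, n5, n6, n7, n8, n9⟩ := hn
      exact n9 (h.dist_two ⟨a1, a2, a3, n1, n2, n3, hd 1, hd 2, hd 3⟩
        ⟨a6.symm, a7, a8, n4, n5, n6, hd 5, hd 7, hd 8⟩ a4 a5 n7 n8)
    · obtain ⟨a1, a2, a3, a4, a5, a6, a7, a8, a9⟩ := ha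
      obtain ⟨n1, n2, n3, n4, n5, n6, n7, n8⟩ := hn
      exact n8 (h.dist_three ⟨a1, a2, a3, n1, n2, n3, hd 1, hd 2, hd 3⟩
        ⟨a7.symm, a8, a9, n4, n5, n6, hd 6, hd 8, hd 9⟩ a4 a5 a6 n7)

/-- The vertex `v` is away from all trees to be protected. -/
def Far (d : ℕ) (G : SimpleGraph V) (v : V) : Prop :=
  ∀ {c s s' u}, Ctr d G c s s' u → v ≠ s ∧ ¬ G.Adj v s ∧ v ≠ u ∧ ¬ G.Adj v u

theorem exists_of_not_far {d : ℕ} {G : SimpleGraph V} {v : V} (h : ¬ Far d G v) :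
    ∃ c s s' u, Ctr d G c s s' u ∧ (v = s ∨ G.Adj v s ∨ v = u ∨ G.Adj v u) := by
  by_contra hc
  push Not at hc
  exact h fun h' => hc _ _ _ _ h'

section

variable {d : ℕ} {G : SimpleGraph V}

theorem Far.ne_center {v c s s' u : V} (hv : Far d G v) (hc : Ctr d G c s s' u) : v ≠ c := by
  rintro rfl
  exact (hv hc).2.1 hc.adj₁

theorem SpNice.eq_of_not_far (hd : 3 ≤ d) (h : SpNice d G) {b : V} (hb : d ≤ dg G b)
    (hfar : ¬ Far d G b) : ∃ c s s' u, Ctr d G c s s' u ∧ (b = s ∨ b = c) := by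
  obtain ⟨c, s, s', u, hc, hb'⟩ := exists_of_not_far hfar
  refine ⟨c, s, s', u, hc, ?_⟩
  rcases hb' with h1 | h1 | rfl | h1
  · exact .inl h1
  · by_contra! hne
    have := h.dg_leaf hc h1.symm hne.2.symm
    omega
  · have := h.dg_mid hc
    omega
  · by_contra! hne
    have := h.dg_end hc h1.symm hne.2.symm
    omega

variable [Finite V]

theorem Ctr.three_le {c s s' u : V} (h : Ctr d G c s s' u) : 3 ≤ dg G c :=
  three_le_dg h.adj₁ h.adj₂ h.adj₃ h.ne₁ h.ne₂ h.ne₃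

theorem SpNice.neighborSet_eq (h : SpNice d G) {c s s' u : V} (hc : Ctr d G c s s' u) :
    ({s, s', u} : Set V) = G.neighborSet c := by
  have h3 : ({s, s', u} : Set V).ncard = 3 :=
    Set.ncard_eq_three.2 ⟨s, s', u, hc.ne₁, hc.ne₂, hc.ne₃, rfl⟩
  refine Set.eq_of_subset_of_ncard_le ?_ ?_ (Set.toFinite _)
  · rintro _ (rfl | rfl | rfl)
    exacts [hc.adj₁, hc.adj₂, hc.adj₃]
  · have := h.dg_center hc
    unfold dg at this
    omega

theorem SpNice.eq_of_adj (h : SpNice d G) {c s s' u x : V} (hc : Ctr d G c s s' u)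
    (hx : G.Adj c x) : x = s ∨ x = s' ∨ x = u := by
  have : x ∈ ({s, s', u} : Set V) := by
    rw [h.neighborSet_eq hc]
    exact hx
  simpa using this

theorem Far.not_adj_center (h : SpNice d G) {v c s s' u : V} (hv : Far d G v)
    (hc : Ctr d G c s s' u) : ¬ G.Adj v c := by
  intro ha
  rcases h.eq_of_adj hc ha.symm with rfl | rfl | rfl
  exacts [(hv hc).1 rfl, (hv hc.symm).1 rfl, (hv hc).2.2.1 rfl]

theorem Far.of_adj (hd : 3 ≤ d) (h : SpNice d G) {v b : V} (hv : Far d G v) (hvb : G.Adj v b)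
    (hb : d ≤ dg G b) : Far d G b := by
  by_contra hfar
  obtain ⟨c, s, s', u, hc, rfl | rfl⟩ := h.eq_of_not_far hd hb hfar
  · exact (hv hc).2.1 hvb
  · exact hv.not_adj_center h hc hvb

end

/-- A vertex to which a pendant tree can be attached. -/
structure SpGood (d : ℕ) (G : SimpleGraph V) (v : V) : Prop where
  far : Far d G v
  unique : ∀ {a b}, G.Adj v a → G.Adj v b → d ≤ dg G a → d ≤ dg G b → a = b
  not_adj : dg G v < d → ∀ {b}, G.Adj v b → dg G b < d
  not_near : dg G v < d → ∀ {p b t}, G.Adj v p → G.Adj p b → G.Adj p t → b ≠ v → t ≠ v → b ≠ t →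
    dg G b < d

/-- A leaf by which a tree can be attached. -/
structure SpLeaf (d : ℕ) (G : SimpleGraph V) (x : V) : Prop where
  dg_le : dg G x ≤ 1
  unique : ∀ {p a b}, G.Adj x p → G.Adj p a → G.Adj p b → d ≤ dg G a → d ≤ dg G b → a = b
  not_end : ∀ {c s s' p}, G.Adj x p → ¬ Ctr d G c s s' p

theorem SpNice.ctr_of_addE [Finite V] {d : ℕ} (hd : 3 ≤ d) {G : SimpleGraph V}
    {D : Set V} (hD : Closed G D) {x v : V} (hv : v ∈ D) (hx : x ∉ D) (hgood : SpGood d G v)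
    (hleaf : SpLeaf d G x) {c s s' t : V} (hc : Ctr d (addE G v x) c s s' t) :
    Ctr d G c s s' t := by
  have hne : v ≠ x := by
    rintro rfl
    exact hx hv
  have hadj : ¬ G.Adj v x := fun ha => hx (hD _ hv _ ha)
  have hdx := dg_addE_right hne hadj
  have hdv := dg_addE_left hne hadj
  have hdy : ∀ {y}, y ≠ v → y ≠ x → dg (_root_.addE G v x) y = dg G y := dg_addE_of_ne
  have hback : ∀ {y z}, (_root_.addE G v x).Adj y z → y ≠ x → z ≠ x → G.Adj y z := by
    intro y z hyz h1 h2
    rcases addE_adj.1 hyz with h3 | ⟨-, ⟨-, h3⟩ | ⟨h3, -⟩⟩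
    · exact h3
    · exact absurd h3 h2
    · exact absurd h3 h1
  have hl := hleaf.dg_le
  have hcx : c ≠ x := by
    rintro rfl
    have := hc.three_le
    omega
  have hsx : ∀ {y}, d ≤ dg (_root_.addE G v x) y → y ≠ x := by
    rintro _ h rfl
    omega
  have hs := hsx hc.dg₁
  have hs' := hsx hc.dg₂
  have a₁ := hback hc.adj₁ hcx hs
  have a₂ := hback hc.adj₂ hcx hs'
  have b₁ := hc.dg₁
  have b₂ := hc.dg₂
  have b₃ := hc.dg₃
  by_cases hcv : c = v
  · subst hcv
    rw [hdy hc.adj₁.ne' hs] at b₁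
    rw [hdy hc.adj₂.ne' hs'] at b₂
    exact absurd (hgood.unique a₁ a₂ b₁ b₂) hc.ne₁
  by_cases htx : t = x
  · subst htx
    have a₃ : G.Adj c t := by
      rcases addE_adj.1 hc.adj₃ with h3 | ⟨-, ⟨h3, -⟩ | ⟨h3, -⟩⟩
      · exact h3
      · exact absurd h3 hcv
      · exact absurd h3 hcx
    have hcD : c ∉ D := fun h => hx (hD _ h _ a₃)
    have hsv : s ≠ v := by
      rintro rfl
      exact hcD (hD _ hv _ a₁.symm)
    have hsv' : s' ≠ v := by
      rintro rfl
      exact hcD (hD _ hv _ a₂.symm)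
    rw [hdy hsv hs] at b₁
    rw [hdy hsv' hs'] at b₂
    exact absurd (hleaf.unique a₃.symm a₁ a₂ b₁ b₂) hc.ne₁
  have a₃ := hback hc.adj₃ hcx htx
  have hstar : ∀ {s'}, Ctr d (_root_.addE G v x) c v s' t → G.Adj c v → G.Adj c s' → s' ≠ x →
      False := by
    intro s' hc a₁ a₂ hs'
    have b₂ := hc.dg₂
    have b₃ := hc.dg₃
    rw [hdy hc.ne₁.symm hs'] at b₂
    rw [hdy hc.ne₂.symm htx] at b₃
    by_cases hlt : d ≤ dg G v
    · exact (hgood.far ⟨a₁, a₂, a₃, hc.ne₁, hc.ne₂, hc.ne₃, hlt, b₂, b₃⟩).1 rfl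
    · exact (hgood.not_near (not_le.1 hlt) a₁.symm a₂ a₃ hc.ne₁.symm hc.ne₂.symm
        hc.ne₃).not_ge b₂
  by_cases hsv : s = v
  · subst hsv
    exact (hstar hc a₁ a₂ hs').elim
  by_cases hsv' : s' = v
  · subst hsv'
    exact (hstar hc.symm a₂ a₁ hs).elim
  rw [hdy hsv hs] at b₁
  rw [hdy hsv' hs'] at b₂
  by_cases htv : t = v
  · subst htv
    by_cases hlt : 2 ≤ dg G t
    · exact ⟨a₁, a₂, a₃, hc.ne₁, hc.ne₂, hc.ne₃, b₁, b₂, hlt⟩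
    · exact absurd b₁ (hgood.not_near (by omega) a₃.symm a₁ a₂ hsv hsv' hc.ne₁).not_ge
  rw [hdy htv htx] at b₃
  exact ⟨a₁, a₂, a₃, hc.ne₁, hc.ne₂, hc.ne₃, b₁, b₂, b₃⟩

theorem SpNice.addE [Finite V] {d : ℕ} (hd : 3 ≤ d) {G : SimpleGraph V} (h : SpNice d G)
    {D : Set V} (hD : Closed G D) {x v : V} (hv : v ∈ D) (hx : x ∉ D) (hgood : SpGood d G v)
    (hleaf : SpLeaf d G x) : SpNice d (addE G v x) := by
  have hne : v ≠ x := by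
    rintro rfl
    exact hx hv
  have hadj : ¬ G.Adj v x := fun ha => hx (hD _ hv _ ha)
  have hdx := dg_addE_right hne hadj
  have hdv := dg_addE_left hne hadj
  have hdy : ∀ {y}, y ≠ v → y ≠ x → dg (_root_.addE G v x) y = dg G y := dg_addE_of_ne
  have hback : ∀ {y z}, (_root_.addE G v x).Adj y z → y ≠ v → y ≠ x → G.Adj y z := by
    intro y z hyz h1 h2
    rcases addE_adj.1 hyz with h3 | ⟨-, ⟨h3, -⟩ | ⟨h3, -⟩⟩
    · exact h3
    · exact absurd h3 h1
    · exact absurd h3 h2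
  have hl := hleaf.dg_le
  have hctr : ∀ {c s s' t}, Ctr d (_root_.addE G v x) c s s' t → Ctr d G c s s' t ∧
      (c ≠ v ∧ c ≠ x) ∧ (s ≠ v ∧ s ≠ x) ∧ (t ≠ v ∧ t ≠ x) := by
    intro c s s' t hc
    have hc' := SpNice.ctr_of_addE hd hD hv hx hgood hleaf hc
    have hf := hgood.far hc'
    refine ⟨hc', ⟨(Far.ne_center hgood.far hc').symm, ?_⟩, ⟨hf.1.symm, ?_⟩, hf.2.2.1.symm, ?_⟩
    · rintro rfl
      have := hc'.three_le
      omega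
    · rintro rfl
      have := hc'.dg₁
      omega
    · rintro rfl
      have := hc'.dg₃
      omega
  have hbig : ∀ {y z}, (_root_.addE G v x).Adj y z → d ≤ dg (_root_.addE G v x) y →
      d ≤ dg (_root_.addE G v x) z → G.Adj y z ∧ d ≤ dg G y := by
    intro y z hyz hy hz
    have hyx : y ≠ x := by
      rintro rfl
      omega
    have hzx : z ≠ x := by
      rintro rfl
      omega
    by_cases hyv : y = v
    · subst hyv
      have ha := (hback hyz.symm hyz.ne' hzx).symm
      rw [hdy hyz.ne' hzx] at hz
      refine ⟨ha, ?_⟩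
      by_contra hlt
      exact (hgood.not_adj (not_le.1 hlt) ha).not_ge hz
    · rw [hdy hyv hyx] at hy
      exact ⟨hback hyz hyv hyx, hy⟩
  refine ⟨h.c3.addE (by norm_num) hD hv hx, h.c4.addE (by norm_num) hD hv hx,
    h.c5.addE (by norm_num) hD hv hx, ?_, ?_, ?_, ?_, ?_, ?_, ?_, ?_⟩
  · intro a b c e f e1 e2 e3 e4 n1 n2 n3 d1 d2 d3 d4
    by_contra! hlt
    obtain ⟨g1, k1⟩ := hbig e1 d1 d2
    obtain ⟨g2, k2⟩ := hbig e2 d2 d3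
    obtain ⟨g3, k3⟩ := hbig e3 d3 d4
    obtain ⟨g4, k4⟩ := hbig e4 d4 hlt
    obtain ⟨g5, k5⟩ := hbig e4.symm hlt d4
    exact (h.path g1 g2 g3 g4 n1 n2 n3 k1 k2 k3 k4).not_ge k5
  · intro c s s' u hc
    obtain ⟨hc, ⟨h1, h2⟩, -⟩ := hctr hc
    rw [hdy h1 h2]
    exact h.dg_center hc
  · intro c s s' u hc
    obtain ⟨hc, -, ⟨h1, h2⟩, -⟩ := hctr hc
    rw [hdy h1 h2]
    exact h.dg_star hc
  · intro c s s' u hc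
    obtain ⟨hc, -, -, h1, h2⟩ := hctr hc
    rw [hdy h1 h2]
    exact h.dg_mid hc
  · intro c s s' u u' hc e1 n1
    obtain ⟨kc, -, -, h1, h2⟩ := hctr hc
    have e1' := hback e1 h1 h2
    rw [hdy]
    · exact h.dg_end kc e1' n1
    · rintro rfl
      exact (hgood.far kc).2.2.2 e1'.symm
    · rintro rfl
      exact hleaf.not_end e1'.symm kc
  · intro c s s' u w hc e1 n1
    obtain ⟨kc, -, ⟨h1, h2⟩, -⟩ := hctr hc
    have e1' := hback e1 h1 h2
    by_cases hwx : w = x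
    · subst hwx
      omega
    rw [hdy _ hwx]
    · exact h.dg_leaf kc e1' n1
    · rintro rfl
      exact (hgood.far kc).2.1 e1'.symm
  · intro c s s' u w c₂ s₂ s₂' u₂ hc hc₂ e1 e2 n1 n2
    obtain ⟨kc, -, ⟨h1, h2⟩, -⟩ := hctr hc
    obtain ⟨kc₂, -, ⟨h3, h4⟩, -⟩ := hctr hc₂
    exact h.dist_two kc kc₂ (hback e1 h1 h2) (hback e2.symm h3 h4).symm n1 n2
  · intro c s s' u w w₂ c₂ s₂ s₂' u₂ hc hc₂ e1 e2 e3 n1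
    obtain ⟨kc, -, ⟨h1, h2⟩, -⟩ := hctr hc
    obtain ⟨kc₂, -, ⟨h3, h4⟩, -⟩ := hctr hc₂
    have e1' := hback e1 h1 h2
    have e3' := hback e3.symm h3 h4
    rcases addE_adj.1 e2 with e2' | ⟨-, ⟨rfl, rfl⟩ | ⟨rfl, rfl⟩⟩
    · exact h.dist_three kc kc₂ e1' e2' e3'.symm n1
    · exact absurd e1'.symm (hgood.far kc).2.1
    · exact absurd e3'.symm (hgood.far kc₂).2.1

theorem SpNice.exists_leaf [Finite V] {d : ℕ} (hd : 3 ≤ d) {G : SimpleGraph V} (h : SpNice d G)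
    {D : Set V} (hD : IsComp G D) (ht : Treeish G D) : ∃ x ∈ D, SpLeaf d G x := by
  by_contra hno
  push Not at hno
  have hbad : ∀ y ∈ D, dg G y ≤ 1 → ∃ p, G.Adj y p ∧
      ((∃ a b, G.Adj p a ∧ G.Adj p b ∧ d ≤ dg G a ∧ d ≤ dg G b ∧ a ≠ b) ∨
        ∃ c s s', Ctr d G c s s' p) := by
    intro y hy hle
    by_contra hc
    push Not at hc
    refine hno y hy ⟨hle, ?_, ?_⟩
    · intro p a b hp ha hb h1 h2
      exact (hc p hp).1 a b ha hb h1 h2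
    · intro c s s' p hp
      exact (hc p hp).2 c s s'
  set Z : Set V := {y | y ∈ D ∧ 2 ≤ dg G y ∧ ∀ c s s', ¬ Ctr d G c s s' y} with hZ
  have hbigZ : ∀ y ∈ D, d ≤ dg G y → y ∈ Z := by
    intro y hy hdy
    refine ⟨hy, by omega, fun c s s' hc => ?_⟩
    have := h.dg_mid hc
    omega
  have hZe : ¬ Z.Nonempty := by
    intro hne
    obtain ⟨y, ⟨hyD, hy2, hyc⟩, hy⟩ := ht Z (fun y hy => hy.1) hne
    by_cases htwo : ∃ a b, G.Adj y a ∧ G.Adj y b ∧ d ≤ dg G a ∧ d ≤ dg G b ∧ a ≠ b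
    · obtain ⟨a, b, ha, hb, h1, h2, hab⟩ := htwo
      exact hab (hy a (hbigZ a (hD.closed _ hyD _ ha) h1) b (hbigZ b (hD.closed _ hyD _ hb) h2)
        ha hb)
    have hall : ∀ w, G.Adj y w → w ∈ Z := by
      intro w hw
      have hwD := hD.closed _ hyD _ hw
      refine ⟨hwD, ?_, ?_⟩
      · by_contra hlt
        obtain ⟨p, hp, hp'⟩ := hbad w hwD (by omega)
        obtain rfl := eq_of_dg_le_one (by omega) hp hw.symm
        rcases hp' with hp' | ⟨c, s, s', hc⟩
        · exact htwo hp'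
        · exact hyc _ _ _ hc
      · intro c s s' hc
        by_cases hcy : c = y
        · subst hcy
          exact htwo ⟨s, s', hc.adj₁, hc.adj₂, hc.dg₁, hc.dg₂, hc.ne₁⟩
        · have := h.dg_end hc hw.symm hcy
          omega
    obtain ⟨a, b, ha, hb, hab⟩ := (Set.one_lt_ncard_iff (Set.toFinite _)).1 hy2
    exact hab (hy a (hall a ha) b (hall b hb) ha hb)
  obtain ⟨y, hy, hle⟩ := ht.exists_dg_le_one hD.nonempty hD.closed
  obtain ⟨p, hp, ⟨a, b, ha, -, h1, -⟩ | ⟨c, s, s', hc⟩⟩ := hbad y hy hle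
  · exact hZe ⟨a, hbigZ a (hD.closed _ (hD.closed _ hy _ hp) _ ha) h1⟩
  · exact hZe ⟨s, hbigZ s (hD.closed _ (hD.closed _ (hD.closed _ hy _ hp) _ hc.adj₃.symm) _
      hc.adj₁) hc.dg₁⟩

theorem SpNice.far_of_leaf [Finite V] {d : ℕ} (hd : 3 ≤ d) {G : SimpleGraph V} (h : SpNice d G)
    {c s s' u w w' : V} (hc : Ctr d G c s s' u) (hw : G.Adj s w) (hcw : c ≠ w)
    (hww : G.Adj w w') (hne : s ≠ w') : Far d G w' := by
  intro c₂ s₂ s₂' u₂ hc₂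
  have hdw := h.dg_leaf hc hw hcw
  have hdw2 : 2 ≤ dg G w := two_le_dg hw.symm hww hne
  have hwc : w ≠ c₂ := by
    rintro rfl
    have := hc₂.three_le
    omega
  have hds := hc.dg₁
  have hnot : w' ≠ c₂ := by
    rintro rfl
    have hd1 := hc₂.dg₁
    have hd2 := hc₂.dg₂
    rcases h.eq_of_adj hc₂ hww.symm with rfl | rfl | rfl
    · omega
    · omega
    · have := h.dg_end hc₂ hw.symm hne.symm
      omega
  refine ⟨?_, ?_, ?_, ?_⟩
  · rintro rfl
    exact hwc (h.dist_two hc hc₂ hw hww hne hcw)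
  · intro ha
    exact hnot (h.dist_three hc hc₂ hw hww ha hcw)
  · rintro rfl
    have := h.dg_end hc₂ hww.symm hwc.symm
    omega
  · intro ha
    have hw1 := h.dg_end hc₂ ha.symm hnot.symm
    obtain rfl := eq_of_dg_le_one (by omega) ha hww.symm
    by_cases hsc : c₂ = s
    · subst hsc
      by_cases hs : c = s₂
      · have := h.dg_leaf hc hc₂.adj₂ (by
          rintro rfl
          exact hc₂.ne₁ hs.symm)
        have := hc₂.dg₂
        omega
      · have := h.dg_leaf hc hc₂.adj₁ hs
        have := hc₂.dg₁
        omega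
    · have := h.dg_end hc₂ hw.symm hsc
      omega

theorem SpNice.ncard_of_not_far [Finite V] {d : ℕ} (hd : 3 ≤ d) {G : SimpleGraph V}
    (h : SpNice d G) {D : Set V} (hD : IsComp G D) (hfar : ∀ v ∈ D, ¬ Far d G v) :
    D.ncard = 2 * d + 3 := by
  obtain ⟨v, hv⟩ := hD.nonempty
  obtain ⟨c, s, s', u, hc, hv'⟩ := exists_of_not_far (hfar v hv)
  have hcD : c ∈ D := by
    rcases hv' with rfl | h1 | rfl | h1
    · exact hD.closed _ hv _ hc.adj₁.symm
    · exact hD.closed _ (hD.closed _ hv _ h1) _ hc.adj₁.symm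
    · exact hD.closed _ hv _ hc.adj₃.symm
    · exact hD.closed _ (hD.closed _ hv _ h1) _ hc.adj₃.symm
  have hsD := hD.closed _ hcD _ hc.adj₁
  have hsD' := hD.closed _ hcD _ hc.adj₂
  have huD := hD.closed _ hcD _ hc.adj₃
  have hstar : ∀ {s s'}, Ctr d G c s s' u → s ∈ D → ∀ {w t}, G.Adj s w → w ≠ c → G.Adj w t →
      t = s := by
    intro s s' hc hsD w t hw hwc ht
    by_contra hne
    exact hfar t (hD.closed _ (hD.closed _ hsD _ hw) _ ht)
      (h.far_of_leaf hd hc hw hwc.symm ht (Ne.symm hne))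
  set A : Set V := G.neighborSet s \ {c} with hA
  set B : Set V := G.neighborSet s' \ {c} with hB
  have hDeq : (G.neighborSet c ∪ G.neighborSet u) ∪ (A ∪ B) = D := by
    apply hD.minimal
    · rintro x ((hx | hx) | (hx | hx))
      · exact hD.closed _ hcD _ hx
      · exact hD.closed _ huD _ hx
      · exact hD.closed _ hsD _ hx.1
      · exact hD.closed _ hsD' _ hx.1
    · exact ⟨s, .inl (.inl hc.adj₁)⟩
    · have hcmem : ∀ t, G.Adj c t → t ∈ (G.neighborSet c ∪ G.neighborSet u) ∪ (A ∪ B) :=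
        fun t ht => .inl (.inl ht)
      have hcmem' : c ∈ (G.neighborSet c ∪ G.neighborSet u) ∪ (A ∪ B) :=
        .inl (.inr hc.adj₃.symm)
      rintro x ((hx | hx) | ⟨hx, hxc⟩ | ⟨hx, hxc⟩) t hxt
      · rcases h.eq_of_adj hc hx with rfl | rfl | rfl
        · by_cases htc : t = c
          · subst htc
            exact hcmem'
          · exact .inr (.inl ⟨hxt, htc⟩)
        · by_cases htc : t = c
          · subst htc
            exact hcmem'
          · exact .inr (.inr ⟨hxt, htc⟩)
        · exact .inl (.inr hxt)
      · by_cases hxc : x = c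
        · subst hxc
          exact hcmem t hxt
        · have := h.dg_end hc hx (Ne.symm hxc)
          obtain rfl := eq_of_dg_le_one (by omega) hxt (show G.Adj u x from hx).symm
          exact hcmem _ hc.adj₃
      · obtain rfl := hstar hc hsD hx hxc hxt
        exact hcmem _ hc.adj₁
      · obtain rfl := hstar hc.symm hsD' hx hxc hxt
        exact hcmem _ hc.adj₂
  have hd1 : Disjoint (G.neighborSet c) (G.neighborSet u) := by
    rw [Set.disjoint_left]
    intro x h1 h2
    exact h.c3.triangle hc.adj₃ h2 (show G.Adj c x from h1).symm
  have hd2 : Disjoint A B := by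
    rw [Set.disjoint_left]
    rintro x ⟨h1, h1'⟩ ⟨h2, h2'⟩
    exact h.c4.square hc.adj₁ h1 (show G.Adj s' x from h2).symm hc.adj₂.symm (Ne.symm h1') hc.ne₁
  have hd3 : Disjoint (G.neighborSet c ∪ G.neighborSet u) (A ∪ B) := by
    rw [Set.disjoint_left]
    rintro x (h1 | h1) (⟨h2, h2'⟩ | ⟨h2, h2'⟩)
    · exact h.c3.triangle hc.adj₁ h2 (show G.Adj c x from h1).symm
    · exact h.c3.triangle hc.adj₂ h2 (show G.Adj c x from h1).symm
    · exact h.c4.square hc.adj₁ h2 (show G.Adj u x from h1).symm hc.adj₃.symm (Ne.symm h2') hc.ne₂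
    · exact h.c4.square hc.adj₂ h2 (show G.Adj u x from h1).symm hc.adj₃.symm (Ne.symm h2') hc.ne₃
  have k1 := h.dg_center hc
  have k2 := h.dg_star hc
  have k3 := h.dg_star hc.symm
  have k4 := h.dg_mid hc
  have k5 := hc.three_le
  have k6 := hc.dg₁
  have k7 := hc.dg₂
  have k8 := hc.dg₃
  have kA : A.ncard + 1 = _ := Set.ncard_sdiff_singleton_add_one hc.adj₁.symm (Set.toFinite _)
  have kB : B.ncard + 1 = _ := Set.ncard_sdiff_singleton_add_one hc.adj₂.symm (Set.toFinite _)
  rw [← hDeq, Set.ncard_union_eq hd3, Set.ncard_union_eq hd1, Set.ncard_union_eq hd2]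
  unfold dg at *
  omega

theorem SpNice.exists_good [Finite V] {d : ℕ} (hd : 3 ≤ d) {G : SimpleGraph V} (h : SpNice d G)
    {D : Set V} (hD : IsComp G D) (hcard : D.ncard ≠ 2 * d + 3) : ∃ v ∈ D, SpGood d G v := by
  have hex : ∃ v ∈ D, Far d G v := by
    by_contra! hno
    exact hcard (h.ncard_of_not_far hd hD hno)
  by_cases hbig : ∃ v ∈ D, Far d G v ∧ d ≤ dg G v
  · have huniq : ∃ v ∈ D, Far d G v ∧ d ≤ dg G v ∧
        ∀ {a b}, G.Adj v a → G.Adj v b → d ≤ dg G a → d ≤ dg G b → a = b := by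
      by_contra! hno
      have hstep : ∀ v ∈ D, Far d G v → d ≤ dg G v → ∀ z,
          ∃ a, G.Adj v a ∧ a ≠ z ∧ a ∈ D ∧ Far d G a ∧ d ≤ dg G a := by
        intro v hv hf hdv z
        obtain ⟨a, b, ha, hb, h1, h2, hab⟩ := hno v hv hf hdv
        by_cases haz : a = z
        · exact ⟨b, hb, fun hbz => hab (haz.trans hbz.symm), hD.closed _ hv _ hb,
            hf.of_adj hd h hb h2, h2⟩
        · exact ⟨a, ha, haz, hD.closed _ hv _ ha, hf.of_adj hd h ha h1, h1⟩
      obtain ⟨v, hv, hf, hdv⟩ := hbig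
      obtain ⟨v₁, a₁, -, hv₁, hf₁, hd₁⟩ := hstep v hv hf hdv v
      obtain ⟨v₂, a₂, n₂, hv₂, hf₂, hd₂⟩ := hstep v₁ hv₁ hf₁ hd₁ v
      obtain ⟨v₃, a₃, n₃, hv₃, hf₃, hd₃⟩ := hstep v₂ hv₂ hf₂ hd₂ v₁
      obtain ⟨v₄, a₄, n₄, hv₄, hf₄, hd₄⟩ := hstep v₃ hv₃ hf₃ hd₃ v₂
      exact (h.path a₁ a₂ a₃ a₄ n₂.symm n₃.symm n₄.symm hdv hd₁ hd₂ hd₃).not_ge hd₄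
    obtain ⟨v, hv, hf, hdv, hu⟩ := huniq
    exact ⟨v, hv, hf, hu, fun hlt => absurd hdv hlt.not_ge, fun hlt => absurd hdv hlt.not_ge⟩
  · push Not at hbig
    obtain ⟨v, hv, hf⟩ := hex
    have hnb : ∀ {b}, G.Adj v b → dg G b < d := by
      intro b hb
      by_contra! hlt
      exact (hbig b (hD.closed _ hv _ hb) (hf.of_adj hd h hb hlt)).not_ge hlt
    refine ⟨v, hv, hf, fun ha _ h1 _ => absurd h1 (hnb ha).not_ge, fun _ => hnb, ?_⟩
    intro _ p b t hp hb ht hbv htv hbt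
    by_contra! hlt
    have hbD := hD.closed _ (hD.closed _ hv _ hp) _ hb
    have hfb : ¬ Far d G b := fun hfb => (hbig b hbD hfb).not_ge hlt
    obtain ⟨c, s, s', u, hc, rfl | rfl⟩ := h.eq_of_not_far hd hlt hfb
    · by_cases hpc : c = p
      · subst hpc
        exact hf.not_adj_center h hc hp
      · have := h.dg_leaf hc hb.symm hpc
        have := three_le_dg hp.symm hb ht hbv.symm htv.symm hbt
        omega
    · rcases h.eq_of_adj hc hb.symm with rfl | rfl | rfl
      exacts [(hf hc).2.1 hp, (hf hc.symm).2.1 hp, (hf hc).2.2.2 hp]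

theorem spPats_join [Finite V] {d : ℕ} (hd : 3 ≤ d) {G : SimpleGraph V}
    (h : ¬ PatBad (spPats d) G) {D₁ D₂ : Set V} (hdis : Disjoint D₁ D₂) (h₁ : IsComp G D₁)
    (h₂ : IsComp G D₂) (ht : Treeish G D₂) (hcard : D₁.ncard ≠ 2 * d + 3) :
    ∃ v ∈ D₁, ∃ u ∈ D₂, ¬ PatBad (spPats d) (addE G v u) := by
  rw [spNice_iff] at h
  obtain ⟨v, hv, hgood⟩ := h.exists_good hd h₁ hcard
  obtain ⟨u, hu, hleaf⟩ := h.exists_leaf hd h₂ ht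
  exact ⟨v, hv, u, hu, spNice_iff.2
    (h.addE hd h₁.closed hv (Set.disjoint_right.1 hdis hu) hgood hleaf)⟩

/-- The parent map of the tree formed by two stars and a path attached to a root. -/
def spPar (e : ℕ) : (Bool × Option (Fin e)) ⊕ Fin 3 → (Bool × Option (Fin e)) ⊕ Fin 3
  | .inl (β, some _) => .inl (β, none)
  | .inl (_, none) => .inr 0
  | .inr j => .inr (![0, 0, 1] j)

/-- The distance to the root. -/
def spRank (e : ℕ) : (Bool × Option (Fin e)) ⊕ Fin 3 → ℕ
  | .inl (_, some _) => 2
  | .inl (_, none) => 1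
  | .inr j => ![0, 1, 2] j

theorem spRank_lt {e : ℕ} (a : (Bool × Option (Fin e)) ⊕ Fin 3) (h : spPar e a ≠ a) :
    spRank e (spPar e a) < spRank e a := by
  rcases a with ⟨β, _ | k⟩ | j
  · simp [spPar, spRank]
  · simp [spPar, spRank]
  · fin_cases j <;> simp_all [spPar, spRank]

section

variable {e : ℕ} {y : (Bool × Option (Fin e)) ⊕ Fin 3}

theorem spPar_adj_root : (funG (spPar e)).Adj (.inr 0) y ↔
    y = .inr 1 ∨ ∃ β, y = .inl (β, none) := by
  rcases y with ⟨β, _ | k⟩ | j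
  · simp [funG, spPar]
  · simp [funG, spPar]
  · fin_cases j <;> simp [funG, spPar]

theorem spPar_adj_star {β : Bool} : (funG (spPar e)).Adj (.inl (β, none)) y ↔
    y = .inr 0 ∨ ∃ k, y = .inl (β, some k) := by
  rcases y with ⟨γ, _ | k⟩ | j
  · simp [funG, spPar]
  · simp [funG, spPar, eq_comm]
  · fin_cases j <;> simp [funG, spPar]

theorem spPar_adj_leaf {β : Bool} {k : Fin e} : (funG (spPar e)).Adj (.inl (β, some k)) y ↔
    y = .inl (β, none) := by
  rcases y with ⟨γ, _ | k⟩ | j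
  · simp [funG, spPar, eq_comm]
  · simp [funG, spPar]
  · fin_cases j <;> simp [funG, spPar]

theorem spPar_adj_mid : (funG (spPar e)).Adj (.inr 1) y ↔ y = .inr 0 ∨ y = .inr 2 := by
  rcases y with ⟨γ, _ | k⟩ | j
  · simp [funG, spPar]
  · simp [funG, spPar]
  · fin_cases j <;> simp [funG, spPar]

theorem spPar_adj_end : (funG (spPar e)).Adj (.inr 2) y ↔ y = .inr 1 := by
  rcases y with ⟨γ, _ | k⟩ | j
  · simp [funG, spPar]
  · simp [funG, spPar]
  · fin_cases j <;> simp [funG, spPar]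

theorem dg_spPar_root : dg (funG (spPar e)) (.inr 0) = 3 := by
  have : (funG (spPar e)).neighborSet (.inr 0) =
      {.inr 1, .inl (true, none), .inl (false, none)} := by
    ext y
    simp [spPar_adj_root, or_comm]
  unfold dg
  rw [this]
  exact Set.ncard_eq_three.2 ⟨_, _, _, by simp, by simp, by simp, rfl⟩

theorem dg_spPar_star (β : Bool) : dg (funG (spPar e)) (.inl (β, none)) = e + 1 := by
  have : (funG (spPar e)).neighborSet (.inl (β, none)) =
      insert (.inr 0) ((fun k => .inl (β, some k)) '' Set.univ) := by
    ext y
    simp only [SimpleGraph.mem_neighborSet, spPar_adj_star, Set.mem_insert_iff, Set.image_univ,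
      Set.mem_range, eq_comm]
  unfold dg
  rw [this, Set.ncard_insert_of_notMem (by simp), Set.ncard_image_of_injective, Set.ncard_univ,
    Nat.card_fin]
  intro k l h
  simpa using h

theorem dg_spPar_leaf (β : Bool) (k : Fin e) : dg (funG (spPar e)) (.inl (β, some k)) = 1 := by
  have : (funG (spPar e)).neighborSet (.inl (β, some k)) = {.inl (β, none)} := by
    ext y
    simp only [SimpleGraph.mem_neighborSet, spPar_adj_leaf, Set.mem_singleton_iff]
  unfold dg
  rw [this, Set.ncard_singleton]

theorem dg_spPar_mid : dg (funG (spPar e)) (.inr 1) = 2 := by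
  have : (funG (spPar e)).neighborSet (.inr 1) = {.inr 0, .inr 2} := by
    ext y
    simp [spPar_adj_mid]
  unfold dg
  rw [this, Set.ncard_pair (by simp)]

theorem dg_spPar_end : dg (funG (spPar e)) (.inr 2) = 1 := by
  have : (funG (spPar e)).neighborSet (.inr 2) = {.inr 1} := by
    ext y
    simp [spPar_adj_end]
  unfold dg
  rw [this, Set.ncard_singleton]

theorem eq_of_le_dg_spPar (he : 2 ≤ e) (h : e + 1 ≤ dg (funG (spPar e)) y) :
    y = .inr 0 ∨ ∃ β, y = .inl (β, none) := by
  rcases y with ⟨β, _ | k⟩ | j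
  · exact .inr ⟨β, rfl⟩
  · rw [dg_spPar_leaf] at h
    omega
  · fin_cases j
    · exact .inl rfl
    · have := h.trans_eq dg_spPar_mid
      omega
    · have := h.trans_eq dg_spPar_end
      omega

theorem spPar_adj_star_star {β γ : Bool} :
    ¬ (funG (spPar e)).Adj (.inl (β, none)) (.inl (γ, none)) := by
  simp [spPar_adj_star]

theorem eq_of_ctr_spPar (he : 2 ≤ e) {c s s' u} (h : Ctr (e + 1) (funG (spPar e)) c s s' u) :
    ∃ β, c = .inr 0 ∧ s = .inl (β, none) ∧ s' = .inl (!β, none) ∧ u = .inr 1 := by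
  have a₁ := h.adj₁
  have a₂ := h.adj₂
  have a₃ := h.adj₃
  have n₁ := h.ne₁
  have n₂ := h.ne₂
  have n₃ := h.ne₃
  have hnot : ∀ {β γ δ : Bool}, β ≠ γ → β ≠ δ → γ ≠ δ → False := by decide
  rcases eq_of_le_dg_spPar he h.dg₁ with rfl | ⟨β, rfl⟩
  · rcases eq_of_le_dg_spPar he h.dg₂ with rfl | ⟨γ, rfl⟩
    · exact absurd rfl n₁
    · rcases spPar_adj_root.1 a₁.symm with rfl | ⟨δ, rfl⟩
      · simp [spPar_adj_mid] at a₂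
      · exact (spPar_adj_star_star a₂).elim
  · rcases eq_of_le_dg_spPar he h.dg₂ with rfl | ⟨γ, rfl⟩
    · rcases spPar_adj_root.1 a₂.symm with rfl | ⟨δ, rfl⟩
      · simp [spPar_adj_mid] at a₁
      · exact (spPar_adj_star_star a₁).elim
    · have hne : β ≠ γ := fun hβ => n₁ (by rw [hβ])
      have hγ : γ = !β := (by decide : ∀ β γ : Bool, β ≠ γ → γ = !β) β γ hne
      rcases spPar_adj_star.1 a₁.symm with rfl | ⟨k, rfl⟩
      · rcases spPar_adj_root.1 a₃ with rfl | ⟨δ, rfl⟩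
        · exact ⟨β, rfl, rfl, by rw [hγ], rfl⟩
        · exact (hnot hne (fun hβ => n₂ (by rw [hβ])) fun hβ => n₃ (by rw [hβ])).elim
      · have := spPar_adj_leaf.1 a₂
        exact absurd this.symm n₁

end

theorem spNice_model {e : ℕ} (he : 2 ≤ e) (m : ℕ) :
    SpNice (e + 1) (funG (copies m (spPar e))) := by
  have htree : Treeish (funG (copies m (spPar e))) Set.univ := by
    refine treeish_funG (fun x => spRank e x.2) ?_
    rintro ⟨i, a⟩ - hx
    exact spRank_lt a (fun h => hx (by simp [copies, h]))
  have hctr : ∀ {c s s' u}, Ctr (e + 1) (funG (copies m (spPar e))) c s s' u →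
      ∃ i β, c = (i, .inr 0) ∧ s = (i, .inl (β, none)) ∧ u = (i, .inr 1) := by
    rintro ⟨i, c⟩ ⟨i₁, s⟩ ⟨i₂, s'⟩ ⟨i₃, u⟩ h
    obtain ⟨rfl, a₁⟩ := funG_copies_adj.1 h.adj₁
    obtain ⟨h₂, a₂⟩ := funG_copies_adj.1 h.adj₂
    obtain ⟨h₃, a₃⟩ := funG_copies_adj.1 h.adj₃
    simp only at h₂ h₃ a₁ a₂ a₃
    subst h₂ h₃
    have b₁ := h.dg₁
    have b₂ := h.dg₂
    have b₃ := h.dg₃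
    rw [dg_funG_copies] at b₁ b₂ b₃
    obtain ⟨β, rfl, rfl, rfl, rfl⟩ := eq_of_ctr_spPar he ⟨a₁, a₂, a₃, fun h' => h.ne₁ (by rw [h']),
      fun h' => h.ne₂ (by rw [h']), fun h' => h.ne₃ (by rw [h']), b₁, b₂, b₃⟩
    exact ⟨i, β, rfl, rfl, rfl⟩
  have hleaf : ∀ {i β w}, (funG (copies m (spPar e))).Adj (i, .inl (β, none)) w →
      (i, .inr 0) ≠ w → ∃ k, w = (i, .inl (β, some k)) := by
    rintro i β ⟨j, w⟩ h hne
    obtain ⟨h1, h2⟩ := funG_copies_adj.1 h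
    simp only at h1 h2
    subst h1
    rcases spPar_adj_star.1 h2 with rfl | ⟨k, rfl⟩
    · exact absurd rfl hne
    · exact ⟨k, rfl⟩
  have hback : ∀ {i β k w}, (funG (copies m (spPar e))).Adj (i, .inl (β, some k)) w →
      w = (i, .inl (β, none)) := by
    rintro i β k ⟨j, w⟩ h
    obtain ⟨h1, h2⟩ := funG_copies_adj.1 h
    simp only at h1 h2
    rw [h1, spPar_adj_leaf.1 h2]
  have hbig : ∀ {a b}, (funG (copies m (spPar e))).Adj a b → ∀ {i β}, a = (i, .inl (β, none)) →
      e + 1 ≤ dg (funG (copies m (spPar e))) b → b = (i, .inr 0) := by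
    rintro _ ⟨j, b⟩ h i β rfl hb
    obtain ⟨h1, h2⟩ := funG_copies_adj.1 h
    simp only at h1 h2
    subst h1
    rw [dg_funG_copies] at hb
    rcases eq_of_le_dg_spPar he hb with rfl | ⟨γ, rfl⟩
    · rfl
    · exact (spPar_adj_star_star h2).elim
  have hroot : ∀ {a b}, (funG (copies m (spPar e))).Adj a b → ∀ {i}, a = (i, .inr 0) →
      e + 1 ≤ dg (funG (copies m (spPar e))) b → ∃ β, b = (i, .inl (β, none)) := by
    rintro _ ⟨j, b⟩ h i rfl hb
    obtain ⟨h1, h2⟩ := funG_copies_adj.1 h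
    simp only at h1 h2
    subst h1
    rw [dg_funG_copies] at hb
    rcases eq_of_le_dg_spPar he hb with rfl | ⟨γ, rfl⟩
    · exact absurd h2 (SimpleGraph.irrefl _)
    · exact ⟨γ, rfl⟩
  refine ⟨.of_treeish (by norm_num) htree, .of_treeish (by norm_num) htree,
    .of_treeish (by norm_num) htree, ?_, ?_, ?_, ?_, ?_, ?_, ?_, ?_⟩
  · rintro a ⟨i, b⟩ c f g e1 e2 e3 - n1 n2 - d1 d2 d3 d4
    exfalso
    have d2' := d2
    rw [dg_funG_copies] at d2'
    rcases eq_of_le_dg_spPar he d2' with rfl | ⟨β, rfl⟩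
    · obtain ⟨γ, rfl⟩ := hroot e2 rfl d3
      exact n2 (hbig e3 rfl d4).symm
    · exact n1 ((hbig e1.symm rfl d1).trans (hbig e2 rfl d3).symm)
  · intro c s s' u hc
    obtain ⟨i, β, rfl, rfl, rfl⟩ := hctr hc
    rw [dg_funG_copies, dg_spPar_root]
    norm_num
  · intro c s s' u hc
    obtain ⟨i, β, rfl, rfl, rfl⟩ := hctr hc
    rw [dg_funG_copies, dg_spPar_star]
    omega
  · intro c s s' u hc
    obtain ⟨i, β, rfl, rfl, rfl⟩ := hctr hc
    rw [dg_funG_copies, dg_spPar_mid]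
    norm_num
  · rintro c s s' u ⟨j, u'⟩ hc e1 n1
    obtain ⟨i, β, rfl, rfl, rfl⟩ := hctr hc
    obtain ⟨h1, e2⟩ := funG_copies_adj.1 e1
    simp only at h1 e2
    subst h1
    rcases spPar_adj_mid.1 e2 with rfl | rfl
    · exact absurd rfl n1
    · rw [dg_funG_copies, dg_spPar_end]
      norm_num
  · intro c s s' u w hc e1 n1
    obtain ⟨i, β, rfl, rfl, rfl⟩ := hctr hc
    obtain ⟨k, rfl⟩ := hleaf e1 n1
    rw [dg_funG_copies, dg_spPar_leaf]
    norm_num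
  · intro c s s' u w c₂ s₂ s₂' u₂ hc hc₂ e1 e2 n1 n2
    obtain ⟨i, β, rfl, rfl, rfl⟩ := hctr hc
    obtain ⟨k, rfl⟩ := hleaf e1 n2
    exact absurd (hback e2).symm n1
  · intro c s s' u w w₂ c₂ s₂ s₂' u₂ hc hc₂ e1 e2 e3 n1
    obtain ⟨i, β, rfl, rfl, rfl⟩ := hctr hc
    obtain ⟨k, rfl⟩ := hleaf e1 n1
    obtain rfl := hback e2
    obtain ⟨j, γ, rfl, rfl, rfl⟩ := hctr hc₂
    exact (spPar_adj_star_star (funG_copies_adj.1 e3).2).elim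

theorem spPats_bad_add {e m : ℕ} (x y : Fin m × ((Bool × Option (Fin e)) ⊕ Fin 3)) (hne : x ≠ y)
    (hadj : ¬ (funG (copies m (spPar e))).Adj x y) :
    PatBad (spPats (e + 1)) (addE (funG (copies m (spPar e))) x y) := by
  by_contra hbad
  rw [spNice_iff] at hbad
  set G := funG (copies m (spPar e)) with hG
  have hle := le_addE G x y
  have hdg : ∀ z, dg G z ≤ dg (addE G x y) z :=
    dg_le_of_embedding (Function.Embedding.refl _) (fun _ _ h => hle h)
  have hadj' : ∀ i {a b}, (funG (spPar e)).Adj a b → (addE G x y).Adj (i, a) (i, b) :=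
    fun i a b h => hle (funG_copies_adj.2 ⟨rfl, h⟩)
  have hroot : ∀ i β, (addE G x y).Adj (i, .inr 0) (i, .inl (β, none)) :=
    fun i β => hadj' i (spPar_adj_root.2 (.inr ⟨β, rfl⟩))
  have hmid : ∀ i, (addE G x y).Adj (i, .inr 0) (i, .inr 1) :=
    fun i => hadj' i (spPar_adj_root.2 (.inl rfl))
  have hend : ∀ i, (addE G x y).Adj (i, .inr 1) (i, .inr 2) :=
    fun i => hadj' i (spPar_adj_mid.2 (.inr rfl))
  have hstar : ∀ i β k, (addE G x y).Adj (i, .inl (β, none)) (i, .inl (β, some k)) :=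
    fun i β k => hadj' i (spPar_adj_star.2 (.inr ⟨k, rfl⟩))
  have hctr : ∀ i β, Ctr (e + 1) (addE G x y) (i, .inr 0) (i, .inl (β, none))
      (i, .inl (!β, none)) (i, .inr 1) := fun i β =>
    ⟨hroot i β, hroot i _, hmid i, by simp, by simp, by simp,
      (by rw [dg_funG_copies, dg_spPar_star] : dg G _ = e + 1).ge.trans (hdg _),
      (by rw [dg_funG_copies, dg_spPar_star] : dg G _ = e + 1).ge.trans (hdg _),
      (by rw [dg_funG_copies, dg_spPar_mid] : dg G _ = 2).ge.trans (hdg _)⟩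
  have hleaf : ∀ z, dg (addE G x y) z = dg G z + 1 → ∃ i β k, z = (i, .inl (β, some k)) := by
    rintro ⟨i, ⟨β, _ | k⟩ | j⟩ hz
    · have := hbad.dg_star (hctr i β)
      rw [hz, dg_funG_copies, dg_spPar_star] at this
      omega
    · exact ⟨i, β, k, rfl⟩
    · rw [dg_funG_copies] at hz
      fin_cases j
      · have := hbad.dg_center (hctr i true)
        have := hz.trans (congrArg (· + 1) dg_spPar_root)
        simp at *
        omega
      · have := hbad.dg_mid (hctr i true)
        have := hz.trans (congrArg (· + 1) dg_spPar_mid)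
        simp at *
        omega
      · have := hbad.dg_end (hctr i true) (hend i) (by simp)
        have := hz.trans (congrArg (· + 1) dg_spPar_end)
        simp at *
        omega
  have hxy : (addE G x y).Adj x y := addE_adj.2 (.inr ⟨hne, .inl ⟨rfl, rfl⟩⟩)
  obtain ⟨i, β, k, hx⟩ := hleaf x (dg_addE_left hne hadj)
  obtain ⟨j, γ, l, hy⟩ := hleaf y (dg_addE_right hne hadj)
  have h1 := hstar i β k
  have h2 := hstar j γ l
  rw [← hx] at h1
  rw [← hy] at h2
  by_cases hij : i = j
  · subst hij
    by_cases hβ : β = γ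
    · subst hβ
      exact hbad.c3.triangle h1 hxy h2.symm
    · exact hbad.c5.pentagon h1 hxy h2.symm (hroot i γ).symm (hroot i β) (by simp [hy])
        (by simpa using hβ) (by simp [hx]) (by simp [hx]) (by simp [hy])
  · have := hbad.dist_three (hctr i β) (hctr j γ) h1 hxy h2.symm (by simp [hx])
    simp [hy] at this

/-- The gadget whose tree consists of two stars and a path attached to a root. -/
noncomputable def spGadget (e : ℕ) (he : 2 ≤ e) : Gadget (2 * (e + 1) + 3) where
  Bad := PatBad (spPats (e + 1))
  size := ((spPats (e + 1)).map Pat.size).sum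
  bad_mono := PatBad.mono
  bad_local := PatBad.exists_local
  τ := (Bool × Option (Fin e)) ⊕ Fin 3
  fin := inferInstance
  card_τ := by simp
  par := spPar e
  root := .inr 0
  par_root := rfl
  rank := spRank e
  rank_lt := spRank_lt
  not_bad m := spNice_iff.2 (spNice_model he m)
  bad_add _ := spPats_bad_add
  join_full h _ _ hd h₁ h₂ _ ht _ hlt := spPats_join (by omega) h hd h₁ h₂ ht hlt.ne

theorem spGadget_std (e : ℕ) (he : 2 ≤ e) : (spGadget e he).Std :=
  fun h _ _ hd h₁ h₂ ht hcard => spPats_join (by omega) h hd h₁ h₂ ht hcard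

end Spider

theorem exists_gadget (ρ : ℕ) : ∃ g : Gadget (ρ + 1), ρ + 1 ∉ smallSizes → g.Std := by
  by_cases hs : ρ + 1 ∈ smallSizes
  · exact ⟨starGadget ρ, fun h => absurd hs h⟩
  · simp only [smallSizes, Set.mem_insert_iff, Set.mem_singleton_iff, not_or] at hs
    rcases Nat.even_or_odd' (ρ + 1) with ⟨k, hk | hk⟩
    · obtain ⟨e, rfl⟩ : ∃ e, k = e + 1 := ⟨k - 1, by omega⟩
      rw [hk]
      exact ⟨ddGadget e (by omega), fun _ => ddGadget_std e _⟩
    · obtain ⟨e, rfl⟩ : ∃ e, k = e + 2 := ⟨k - 2, by omega⟩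
      rw [show ρ + 1 = 2 * (e + 1) + 3 by omega]
      exact ⟨spGadget e (by omega), fun _ => spGadget_std e _⟩

/-- Converse: every admissible system of residue classes is realised by a quasi-finite family. -/
theorem stmt10 (S : ℕ → Set (Set ℕ))
    (hS : ∀ r : ℕ, 1 ≤ r → ∀ C ∈ S r, ResidueClass r C)
    (h7 : ∀ r ∈ ({1, 2, 3, 4, 5, 7} : Set ℕ), S r = ∅ ∨ S r = {C | ResidueClass r C}) :
    ∃ 𝓕 : GraphFam, 𝓕.Nonempty ∧ (∀ F ∈ 𝓕, 1 ≤ Nat.card F.2.edgeSet) ∧ QuasiFinite 𝓕 ∧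
      -- (a)
      (∀ r : ℕ, 1 ≤ r → ∃ K : ℝ, ∀ n : ℕ,
        ((∃ C ∈ S r, n ∈ C) ∧ ∀ q : ℕ, 1 ≤ q → q < r → ∀ C ∈ S q, n ∉ C) →
          |(sat n 𝓕 : ℝ) - (1 - 1 / (r : ℝ)) * n| ≤ K) ∧
      -- (b)
      (∃ g : ℕ → ℝ, Tendsto (fun n : ℕ => g n / n) atTop (𝓝 0) ∧
        ∀ n : ℕ, (∀ r : ℕ, 1 ≤ r → ∀ C ∈ S r, n ∉ C) → (n : ℝ) - g n ≤ (sat n 𝓕 : ℝ)) ∧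
      -- (c)
      ({r : ℕ | 1 ≤ r ∧ ∃ n : ℕ,
          (∃ C ∈ S r, n ∈ C) ∧ ∀ q : ℕ, 1 ≤ q → q < r → ∀ C ∈ S q, n ∉ C}.Finite →
        𝓕.Finite) := by
  choose gad hstd using exists_gadget
  exact stmt10_of_gadgets gad hstd S hS h7
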